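/- arXiv:2403.00680 — 4 statements merged into one kernel-verified Lean document; each statement's English description precedes it below -/
import Mathlib

section
/- Let n, m ≥ 3 be integers. There is an absolute constant C > 0 with the following property. Let β_1, …, β_n ∈ ℝ² and Y ∈ {−1,1}^{m×n}, and for each i ∈ [m] let X_{(i)} ∈ ℝ^{n×2} be the matrix with rows −Y_{ij}·β_jᵀ (j ∈ [n]). Let μ ≥ 1 and ε ∈ (0,1/2), and assume each X_{(i)} is μ-complex in the ℓ₁ sense. Then there exists a weight vector w ∈ ℝ^n with nonnegative entries whose support has size at most C·(μ³/ε⁴)·((log n)⁴·(log log n)⁴ + log m), such that for every i ∈ [m] and every η ∈ ℝ²: |∑_{j=1}^n w_j·ln(1+exp(−Y_{ij}·(β_j·η))) − ∑_{j=1}^n ln(1+exp(−Y_{ij}·(β_j·η)))| ≤ ε·∑_{j=1}^n ln(1+exp(−Y_{ij}·(β_j·η))). In other words, the reweighted subset indexed by the support of w is a (1+ε)-coreset simultaneously for all m instances of the 2PL logistic objective. -/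
/-!
Write `t j = β j ⬝ᵥ η`. Since `ln(1 + eᵗ)` is the sum of the even function `symLoss t` and of
`t / 2`, the `i`-th objective is `f i = ∑ symLoss (t j) - (1/2) ∑ Y i j * t j`: only the linear part
depends on the labels. Complexity gives `n + ∑ |t j| ≤ 6 μ f i` (`loss_lower`), so it suffices to
estimate both parts with an additive error `O((n + ∑ |t j|) / K)`, where `K` is of order `μ / ε`.

The vectors `t` form a space of dimension at most two, and `exists_well_conditioned` writes
`t = a u + b v` with `‖u‖₁, ‖v‖₁ ≤ 1` and `|a|, |b| ≤ 2 ‖t‖₁`. Sampling indices with probability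
proportional to `|u j| + |v j| + 1/n` makes all relevant test functions bounded, and a Chernoff
bound (`exists_sparse_weights`, derandomized) shows that `O(K² log |L|)` samples handle `|L|` tests.
The linear parts need two tests per label vector. The even part is handled on a grid of `O(K⁴)`
points `(a, b)` and extended to the plane by `symLoss_uniform`, using that `symLoss` is Lipschitz
and almost homogeneous. Hence `O(K² log (m K⁴)) = O(K³ log m)` samples suffice, which is within the
stated bound already without the term involving `log n`.
-/

open Finset Matrix

/-- A collection of rows `x` is `μ`-complex in the ℓ₁ sense:
for every `η`, the ℓ₁ mass of the nonnegative entries of `Xη` is at most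
`μ` times the ℓ₁ mass of the negative entries. -/
def Mu1Complex {ι : Type} [Fintype ι] {d : ℕ} (x : ι → Fin d → ℝ) (μ : ℝ) : Prop :=
  ∀ η : Fin d → ℝ,
    ∑ i ∈ Finset.univ.filter (fun i => 0 ≤ x i ⬝ᵥ η), x i ⬝ᵥ η ≤
      μ * ∑ i ∈ Finset.univ.filter (fun i => x i ⬝ᵥ η < 0), |x i ⬝ᵥ η|

/-! ### Importance sampling -/

/-- Derandomized moment bound: a sample of size `k` with multiplicities `c`, built greedily so that
the sum of the exponential moments of the centered tests `φ l` grows by a factor of at most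
`exp (r²)` per draw, as it does on average under `p`. -/
lemma exists_small_moments {ι L : Type} [Fintype ι] [Fintype L] (p : ι → ℝ)
    (hp : ∀ j, 0 < p j) (hsum : ∑ j, p j = 1) (φ : L → ι → ℝ) (hφ : ∀ l j, |φ l j| ≤ 1)
    (h0 : ∀ l, ∑ j, p j * φ l j = 0) (r : ℝ) (hr : 0 ≤ r) (hr1 : r ≤ 1) (k : ℕ) :
    ∃ c : ι → ℕ, ∑ j, c j = k ∧
      ∑ l, Real.exp (r * ∑ j, c j * φ l j) ≤ Fintype.card L * Real.exp (k * r ^ 2) := by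
  classical
  induction k with
  | zero => exact ⟨0, by simp⟩
  | succ k ih =>
    obtain ⟨c, hc, hle⟩ := ih
    have step : ∀ l, ∑ i, p i * Real.exp (r * φ l i) ≤ Real.exp (r ^ 2) := by
      intro l
      have h1 : ∀ i, p i * Real.exp (r * φ l i) ≤ p i * (1 + r ^ 2) + r * (p i * φ l i) := by
        intro i
        have hb : |r * φ l i| ≤ r := by
          rw [abs_mul, abs_of_nonneg hr]
          exact mul_le_of_le_one_right hr (hφ l i)
        have h2 := (abs_le.1 (Real.abs_exp_sub_one_sub_id_le (hb.trans hr1))).2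
        have h3 : (r * φ l i) ^ 2 ≤ r ^ 2 := by
          rw [← sq_abs]; gcongr
        have h4 := mul_le_mul_of_nonneg_left
          (show Real.exp (r * φ l i) ≤ 1 + r ^ 2 + r * φ l i by linarith) (hp i).le
        linarith
      calc _ ≤ ∑ i, (p i * (1 + r ^ 2) + r * (p i * φ l i)) := sum_le_sum fun i _ => h1 i
        _ = 1 + r ^ 2 := by
          rw [sum_add_distrib, ← sum_mul, ← mul_sum, h0, hsum]; ring
        _ ≤ _ := by linarith [Real.add_one_le_exp (r ^ 2)]
    set E : L → ℝ := fun l => Real.exp (r * ∑ j, c j * φ l j) with hE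
    have avg : ∑ i, p i * ∑ l, E l * Real.exp (r * φ l i) ≤
        ∑ i, p i * (Fintype.card L * Real.exp ((k + 1 : ℕ) * r ^ 2)) := by
      calc _ = ∑ l, E l * ∑ i, p i * Real.exp (r * φ l i) := by
            simp only [mul_sum]
            rw [sum_comm]
            exact sum_congr rfl fun _ _ => sum_congr rfl fun _ _ => by ring
        _ ≤ ∑ l, E l * Real.exp (r ^ 2) :=
            sum_le_sum fun l _ => mul_le_mul_of_nonneg_left (step l) (Real.exp_pos _).le
        _ ≤ (Fintype.card L * Real.exp (k * r ^ 2)) * Real.exp (r ^ 2) := by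
            rw [← sum_mul]; gcongr
        _ = _ := by
            rw [← sum_mul, hsum, mul_assoc, ← Real.exp_add, one_mul]
            push_cast; ring_nf
    have hne : (univ : Finset ι).Nonempty := by
      by_contra h
      rw [not_nonempty_iff_eq_empty] at h
      rw [h] at hsum; simp at hsum
    obtain ⟨i, -, hi⟩ := exists_le_of_sum_le hne avg
    refine ⟨c + Pi.single i 1, ?_, ?_⟩
    · simp [sum_add_distrib, hc]
    · refine le_trans (le_of_eq ?_) (le_of_mul_le_mul_left hi (hp i))
      refine sum_congr rfl fun l _ => ?_
      rw [hE, ← Real.exp_add]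
      congr 1
      simp [add_mul, sum_add_distrib, mul_add, Pi.single_apply]

/-- `O(K² log |L|)` draws with probabilities `p j` and weights inverse to `p j` estimate the sums of
all the tests `ψ l` with error `1/K`, provided `|ψ l j| ≤ 3 p j`. -/
lemma exists_sparse_weights {ι L : Type} [Fintype ι] [Fintype L] (p : ι → ℝ)
    (hp : ∀ j, 0 < p j) (hsum : ∑ j, p j = 1) (ψ : L → ι → ℝ) (hψ : ∀ l j, |ψ l j| ≤ 3 * p j)
    (K k : ℕ) (hK : 0 < K) (hk0 : 0 < k)
    (hk : 144 * (K : ℝ) ^ 2 * Real.log (Fintype.card L * 2) ≤ k) :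
    ∃ w : ι → ℝ, (∀ j, 0 ≤ w j) ∧ (univ.filter fun j => w j ≠ 0).card ≤ k ∧
      ∀ l, |∑ j, (w j - 1) * ψ l j| ≤ 1 / K := by
  classical
  have hK' : (1 : ℝ) ≤ K := by exact_mod_cast hK
  have hk' : (0 : ℝ) < k := by exact_mod_cast hk0
  -- Each test enters with both signs, centered, and scaled by `1/6` to lie in `[-1, 1]`.
  let σ : Bool → ℝ := fun b => if b then 1 else -1
  have hσ : ∀ b, |σ b| = 1 := by intro b; cases b <;> simp [σ]
  have hmean : ∀ l, |∑ j, ψ l j| ≤ 3 := fun l => by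
    calc _ ≤ ∑ j, |ψ l j| := abs_sum_le_sum_abs _ _
      _ ≤ ∑ j, 3 * p j := sum_le_sum fun j _ => hψ l j
      _ = 3 := by rw [← mul_sum, hsum]; ring
  obtain ⟨c, hc, hle⟩ := exists_small_moments p hp hsum
    (fun (l : L × Bool) j => σ l.2 * ((ψ l.1 j / p j - ∑ i, ψ l.1 i) / 6))
    (by
      rintro ⟨l, b⟩ j
      have h1 : |ψ l j / p j| ≤ 3 := by
        rw [abs_div, abs_of_pos (hp j), div_le_iff₀ (hp j)]; exact hψ l j
      simp only [abs_mul, hσ, one_mul]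
      have h2 := abs_le.1 h1
      have h3 := abs_le.1 (hmean l)
      rw [abs_le]; constructor <;> linarith)
    (by
      rintro ⟨l, b⟩
      have : ∀ j, p j * (σ b * ((ψ l j / p j - ∑ i, ψ l i) / 6)) =
          σ b / 6 * (ψ l j - p j * ∑ i, ψ l i) := fun j => by
        have := (hp j).ne'
        field_simp
      simp only [this]
      rw [← mul_sum, sum_sub_distrib, ← sum_mul, hsum]; ring)
    (1 / (12 * K)) (by positivity)
    (by rw [div_le_one (by positivity)]; linarith) k
  refine ⟨fun j => c j / (k * p j), fun j => by have := hp j; positivity, ?_, ?_⟩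
  · calc _ ≤ ∑ j ∈ univ.filter (fun j => (c j / (k * p j) : ℝ) ≠ 0), 1 := by simp
      _ ≤ ∑ j ∈ univ.filter (fun j => (c j / (k * p j) : ℝ) ≠ 0), c j := by
        refine sum_le_sum fun j hj => Nat.one_le_iff_ne_zero.2 fun h => ?_
        simp [h] at hj
      _ ≤ ∑ j, c j := sum_le_sum_of_subset (filter_subset _ _)
      _ = k := hc
  · intro l
    have key : ∀ b, σ b * ∑ j, ((c j / (k * p j) : ℝ) - 1) * ψ l j ≤ 1 / K := by
      intro b
      have h1 := (single_le_sum (f := fun l : L × Bool => Real.exp (1 / (12 * K) * ∑ j, c j *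
        (σ l.2 * ((ψ l.1 j / p j - ∑ i, ψ l.1 i) / 6)))) (fun _ _ => (Real.exp_pos _).le)
        (mem_univ (l, b))).trans hle
      have hcard : (0 : ℝ) < Fintype.card L * 2 := by
        have : 0 < Fintype.card L := Fintype.card_pos_iff.2 ⟨l⟩
        positivity
      have h2 := Real.log_le_log (Real.exp_pos _) h1
      simp only [Fintype.card_prod, Fintype.card_bool, Nat.cast_mul, Nat.cast_ofNat] at h2
      rw [Real.log_mul hcard.ne' (Real.exp_pos _).ne', Real.log_exp, Real.log_exp] at h2
      have h3 : ∑ j, c j * (σ b * ((ψ l j / p j - ∑ i, ψ l i) / 6)) =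
          k / 6 * (σ b * ∑ j, ((c j / (k * p j) : ℝ) - 1) * ψ l j) := by
        have hc' : ∑ j, (c j : ℝ) = k := by exact_mod_cast hc
        have e1 : ∀ j, c j * (σ b * ((ψ l j / p j - ∑ i, ψ l i) / 6)) =
            σ b / 6 * (c j * ψ l j / p j - c j * ∑ i, ψ l i) := fun j => by ring
        have e2 : ∀ j, ((c j / (k * p j) : ℝ) - 1) * ψ l j =
          1 / k * (c j * ψ l j / p j) - ψ l j := fun j => by
            have := (hp j).ne'
            field_simp
        simp only [e1, e2]
        rw [← mul_sum, sum_sub_distrib, ← sum_mul, hc', sum_sub_distrib, ← mul_sum]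
        field_simp
      rw [h3] at h2
      set X := σ b * ∑ j, ((c j / (k * p j) : ℝ) - 1) * ψ l j
      set lg := Real.log (Fintype.card L * 2)
      have h4 : 1 / (12 * K) * (k / 6 * X) ≤ 1 / (12 * K) * (k / 6 * (1 / K)) := by
        refine h2.trans ?_
        have : lg ≤ k / (144 * (K : ℝ) ^ 2) := by
          rw [le_div_iff₀ (by positivity)]; linarith
        calc _ ≤ k / (144 * (K : ℝ) ^ 2) + k * (1 / (12 * K)) ^ 2 := by gcongr
          _ = _ := by field_simp; norm_num
      have h5 := le_of_mul_le_mul_left h4 (by positivity)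
      exact le_of_mul_le_mul_left h5 (by positivity)
    have k1 := key true
    have k2 := key false
    simp only [σ] at k1 k2
    rw [abs_le]
    constructor
    · simp at k2; simp; linarith
    · simpa using k1

/-! ### A well-conditioned spanning pair -/

/-- The plane spanned by `x` and `y` in `ℓ₁` is spanned by a pair `u`, `v` of vectors of norm at
most one in which coefficients are at most twice the norm. Take `u` along `x` and `v` along a
residual `y - c u` of minimal norm; the vectors `u` or `v` may vanish in degenerate cases. -/
lemma exists_well_conditioned {ι : Type} [Fintype ι] (x y : ι → ℝ) :
    ∃ u v : ι → ℝ, ∑ j, |u j| ≤ 1 ∧ ∑ j, |v j| ≤ 1 ∧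
      ∀ r s : ℝ, ∃ a b : ℝ, (∀ j, r * x j + s * y j = a * u j + b * v j) ∧
        |a| ≤ 2 * ∑ j, |r * x j + s * y j| ∧ |b| ≤ 2 * ∑ j, |r * x j + s * y j| := by
  set X := ∑ j, |x j| with hX
  have hX0 : 0 ≤ X := sum_nonneg fun _ _ => abs_nonneg _
  have hxX : ∀ j, |x j| ≤ X := fun j =>
    single_le_sum (f := fun j => |x j|) (fun _ _ => abs_nonneg _) (mem_univ j)
  obtain ⟨u, hu, hxu, hu1, hu0⟩ : ∃ u : ι → ℝ, ∑ j, |u j| ≤ 1 ∧ (∀ j, x j = X * u j) ∧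
      (X ≠ 0 → ∑ j, |u j| = 1) ∧ (X = 0 → ∀ j, u j = 0) := by
    have h1 : X ≠ 0 → ∑ j, |x j / X| = 1 := fun h => by
      simp only [abs_div, abs_of_nonneg hX0]
      rw [← sum_div, ← hX, div_self h]
    refine ⟨fun j => x j / X, ?_, fun j => ?_, h1, fun h j => by simp [h]⟩
    · by_cases h : X = 0
      · simp [h]
      · exact (h1 h).le
    · by_cases h : X = 0
      · have := hxX j
        rw [h] at this ⊢
        simpa using this
      · field_simp
  obtain ⟨c, hc, hcX⟩ : ∃ c : ℝ, (∀ c', ∑ j, |y j - c * u j| ≤ ∑ j, |y j - c' * u j|) ∧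
      (X = 0 → c = 0) := by
    by_cases h : X = 0
    · exact ⟨0, fun c' => by simp [hu0 h], fun _ => rfl⟩
    · obtain ⟨c, hc⟩ := Continuous.exists_forall_le (f := fun c : ℝ => ∑ j, |y j - c * u j|)
        (by fun_prop) (by
          refine Filter.tendsto_atTop_mono (f := fun c : ℝ => ‖c‖ + -∑ j, |y j|) (fun c => ?_)
            (Filter.tendsto_atTop_add_const_right _ _ (tendsto_norm_cocompact_atTop))
          have : ∑ j, |c| * |u j| ≤ ∑ j, (|y j - c * u j| + |y j|) := sum_le_sum fun j _ => by
            rw [← abs_mul, show c * u j = - (y j - c * u j) + y j by ring]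
            refine (abs_add_le _ _).trans ?_
            rw [abs_neg]; simp
          rw [← mul_sum, hu1 h, sum_add_distrib] at this
          rw [Real.norm_eq_abs]; linarith)
      exact ⟨c, hc, fun h' => absurd h' h⟩
  set q := ∑ j, |y j - c * u j| with hq
  have hq0 : 0 ≤ q := sum_nonneg fun _ _ => abs_nonneg _
  have hvq : ∀ j, y j - c * u j = q * ((y j - c * u j) / q) := fun j => by
    by_cases h : q = 0
    · have : |y j - c * u j| ≤ q :=
        single_le_sum (f := fun j => |y j - c * u j|) (fun _ _ => abs_nonneg _) (mem_univ j)
      rw [h] at this ⊢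
      simpa using this
    · field_simp
  have hv : ∑ j, |(y j - c * u j) / q| ≤ 1 := by
    simp only [abs_div, abs_of_nonneg hq0]
    rw [← sum_div]
    exact div_self_le_one q
  refine ⟨u, fun j => (y j - c * u j) / q, hu, hv, fun r s => ⟨r * X + s * c, s * q, ?_, ?_⟩⟩
  · intro j
    rw [mul_assoc s q, ← hvq, hxu j]; ring
  set N := ∑ j, |r * x j + s * y j| with hN
  have hN0 : 0 ≤ N := sum_nonneg fun _ _ => abs_nonneg _
  have hb : |s * q| ≤ N := by
    by_cases hs : s = 0
    · simpa [hs] using hN0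
    · rw [abs_mul, abs_of_nonneg hq0]
      refine (mul_le_mul_of_nonneg_left (hc (-(r * X / s))) (abs_nonneg s)).trans (le_of_eq ?_)
      rw [mul_sum]
      refine sum_congr rfl fun j _ => ?_
      rw [← abs_mul, hxu j]
      congr 1
      field_simp
      ring
  refine ⟨?_, hb.trans (by linarith)⟩
  by_cases h : X = 0
  · rw [h, hcX h]; simpa using hN0
  · have h1 : ∑ j, |r * X + s * c| * |u j| ≤
        ∑ j, (|r * x j + s * y j| + |s * q| * |(y j - c * u j) / q|) := by
      refine sum_le_sum fun j _ => ?_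
      rw [← abs_mul, ← abs_mul, mul_assoc s q, ← hvq]
      have : (r * X + s * c) * u j = (r * x j + s * y j) - s * (y j - c * u j) := by
        rw [hxu j]; ring
      rw [this]
      exact abs_sub _ _
    rw [← mul_sum, hu1 h, sum_add_distrib, ← mul_sum] at h1
    have h2 : |s * q| * ∑ j, |(y j - c * u j) / q| ≤ |s * q| :=
      mul_le_of_le_one_right (abs_nonneg _) hv
    linarith

/-! ### The symmetrized logistic loss -/

/-- The even part of `t ↦ ln(1 + eᵗ)`, which equals `ln(2 cosh(t/2))`; the odd part is `t/2`. -/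
noncomputable def symLoss (t : ℝ) : ℝ := Real.log (1 + Real.exp t) - t / 2

lemma symLoss_neg (t : ℝ) : symLoss (-t) = symLoss t := by
  have h : 1 + Real.exp t = Real.exp t * (1 + Real.exp (-t)) := by
    rw [mul_add, ← Real.exp_add]; simp [add_comm]
  unfold symLoss
  rw [h, Real.log_mul (Real.exp_pos _).ne' (by positivity), Real.log_exp]
  ring

lemma symLoss_abs (t : ℝ) : symLoss |t| = symLoss t := by
  rcases abs_choice t with h | h <;> rw [h]
  exact symLoss_neg t

lemma half_abs_le_symLoss (t : ℝ) : |t| / 2 ≤ symLoss t := by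
  rw [← symLoss_abs]
  have : |t| ≤ Real.log (1 + Real.exp |t|) := by
    rw [Real.le_log_iff_exp_le (by positivity)]; linarith
  unfold symLoss; linarith

lemma symLoss_le (t : ℝ) : symLoss t ≤ |t| / 2 + 1 := by
  rw [← symLoss_abs]
  have : Real.log (1 + Real.exp |t|) ≤ |t| + 1 := by
    rw [Real.log_le_iff_le_exp (by positivity), Real.exp_add]
    have h1 : 1 ≤ Real.exp |t| := Real.one_le_exp (abs_nonneg _)
    have h2 := Real.add_one_le_exp (1 : ℝ)
    nlinarith
  unfold symLoss; linarith

lemma symLoss_lipschitz (s t : ℝ) : |symLoss s - symLoss t| ≤ |s - t| := by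
  wlog h : t ≤ s generalizing s t
  · rw [abs_sub_comm, abs_sub_comm s]; exact this t s (le_of_not_ge h)
  have h1 : Real.log (1 + Real.exp t) ≤ Real.log (1 + Real.exp s) :=
    Real.log_le_log (by positivity) (by gcongr)
  have h2 : Real.log (1 + Real.exp s) ≤ (s - t) + Real.log (1 + Real.exp t) := by
    rw [Real.log_le_iff_le_exp (by positivity), Real.exp_add, Real.exp_log (by positivity),
      mul_add, ← Real.exp_add]
    have := Real.one_le_exp (sub_nonneg.2 h)
    simp only [sub_add_cancel]
    linarith
  rw [abs_of_nonneg (sub_nonneg.2 h), abs_le]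
  unfold symLoss
  constructor <;> linarith

lemma half_le_symLoss (t : ℝ) : 1 / 2 ≤ symLoss t := by
  have h2 : Real.log 2 + t / 2 ≤ Real.log (1 + Real.exp t) := by
    rw [Real.le_log_iff_exp_le (by positivity), Real.exp_add, Real.exp_log (by norm_num)]
    have : Real.exp t = Real.exp (t / 2) ^ 2 := by rw [← Real.exp_nat_mul]; congr 1; push_cast; ring
    rw [this]
    nlinarith [sq_nonneg (Real.exp (t / 2) - 1)]
  have := Real.log_two_gt_d9
  unfold symLoss; linarith

lemma loss_eq (y t : ℝ) (hy : y = 1 ∨ y = -1) :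
    Real.log (1 + Real.exp (-y * t)) = symLoss t - y * t / 2 := by
  rcases hy with rfl | rfl
  · rw [← symLoss_neg t]; unfold symLoss; ring_nf
  · unfold symLoss; ring_nf

/-- By `μ`-complexity, `‖Bη‖₁ ≤ (1 + μ) f` because `f` dominates the positive part of `Xη`; and
`ln(1 + eˣ) ≥ 1/2 - |x|/2` gives `n ≤ 2 f + ‖Bη‖₁`. -/
lemma loss_lower {n : ℕ} (β : Fin n → Fin 2 → ℝ) (y : Fin n → ℝ) (hy : ∀ j, y j = 1 ∨ y j = -1)
    (μ : ℝ) (hμ : 1 ≤ μ) (hc : Mu1Complex (fun j k => -y j * β j k) μ) (η : Fin 2 → ℝ) :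
    n + ∑ j, |β j ⬝ᵥ η| ≤ 6 * μ * ∑ j, Real.log (1 + Real.exp (-y j * (β j ⬝ᵥ η))) := by
  set f := ∑ j, Real.log (1 + Real.exp (-y j * (β j ⬝ᵥ η))) with hf
  have hdot : ∀ j (ξ : Fin 2 → ℝ), (fun k => -y j * β j k) ⬝ᵥ ξ = -y j * (β j ⬝ᵥ ξ) :=
    fun j ξ => by
      rw [show (fun k => -y j * β j k) = (-y j) • β j from rfl, smul_dotProduct, smul_eq_mul]
  have habs : ∀ j, |-y j * (β j ⬝ᵥ η)| = |β j ⬝ᵥ η| := fun j => by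
    rw [abs_mul]
    rcases hy j with h | h <;> rw [h] <;> simp only [abs_neg, neg_neg, abs_one, one_mul]
  -- Complexity at `-η` bounds the negative part of `Xη` by its positive part.
  have h1 := hc (-η)
  simp only [hdot, dotProduct_neg, mul_neg, abs_neg] at h1
  set x : Fin n → ℝ := fun j => -y j * (β j ⬝ᵥ η) with hx
  have hA : ∑ j, |β j ⬝ᵥ η| = ∑ j, |x j| := sum_congr rfl fun j _ => (habs j).symm
  have hneg : ∑ j ∈ univ.filter (fun j => 0 ≤ -x j), -x j ≤
      μ * ∑ j ∈ univ.filter (fun j => -x j < 0), |x j| := by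
    simpa only [hx, neg_mul, neg_neg, mul_neg, abs_neg] using h1
  have hpos : ∑ j ∈ univ.filter (fun j => -x j < 0), |x j| ≤ f := by
    calc _ ≤ ∑ j ∈ univ.filter (fun j => -x j < 0), Real.log (1 + Real.exp (x j)) := by
          refine sum_le_sum fun j hj => ?_
          have : 0 < x j := by simpa using hj
          rw [abs_of_pos this, Real.le_log_iff_exp_le (by positivity)]; linarith
      _ ≤ f := sum_le_sum_of_subset_of_nonneg (filter_subset _ _) fun j _ _ =>
          Real.log_nonneg (by linarith [Real.exp_pos (x j)])
  have hsplit : ∑ j, |x j| = ∑ j ∈ univ.filter (fun j => -x j < 0), |x j| +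
      ∑ j ∈ univ.filter (fun j => 0 ≤ -x j), -x j := by
    rw [← sum_filter_add_sum_filter_not univ (fun j => -x j < 0)]
    congr 1
    simp only [not_lt]
    refine sum_congr rfl fun j hj => abs_of_nonpos ?_
    have : 0 ≤ -x j := (mem_filter.1 hj).2
    linarith
  have hAf : ∑ j, |x j| ≤ (1 + μ) * f := by
    rw [hsplit]
    have := hneg.trans (mul_le_mul_of_nonneg_left hpos (by linarith))
    linarith
  have hn : (n : ℝ) / 2 - (∑ j, |x j|) / 2 ≤ f := by
    have : ∑ j : Fin n, ((1 : ℝ) / 2 - |x j| / 2) ≤ f := sum_le_sum fun j _ => by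
      have h2 := half_le_symLoss (x j)
      have h3 := neg_abs_le (x j)
      unfold symLoss at h2
      change _ ≤ Real.log (1 + Real.exp (x j))
      linarith
    rw [sum_sub_distrib, ← sum_div, ← sum_div] at this
    simpa using this
  have hf0 : 0 ≤ f := sum_nonneg fun j _ => Real.log_nonneg
    (by linarith [Real.exp_pos (-y j * (β j ⬝ᵥ η))])
  rw [hA]
  nlinarith

/-! ### Uniform estimates over the plane -/

/-- If the weights are accurate at the grid points `(a, b) = (n/K) * (p, q)` with `|p|, |q| ≤ K²`,
preserve `‖u‖₁`, `‖v‖₁` up to `1/K` and the total mass `n` up to `n/K`, then they are accurate for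
`symLoss` at all `(a, b)`.
Inside the box `|a|, |b| ≤ n K` this is rounding to the grid and the Lipschitz property. Outside,
`(a, b)` is scaled back to the boundary of the box: since `symLoss t = |t|/2 + O(1)` is almost
homogeneous, this costs only `O(n)` times the scaling factor. -/
lemma symLoss_uniform {ι : Type} [Fintype ι] (n : ℝ) (hn : 0 < n) (hcard : Fintype.card ι = n)
    (u v w : ι → ℝ) (hu : ∑ j, |u j| ≤ 1) (hv : ∑ j, |v j| ≤ 1) (hw : ∀ j, 0 ≤ w j)
    (K : ℕ) (hK : 0 < K)
    (hwu : |∑ j, (w j - 1) * (|u j|)| ≤ 1 / K) (hwv : |∑ j, (w j - 1) * (|v j|)| ≤ 1 / K)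
    (hwn : |∑ j, (w j - 1) * (1 / n)| ≤ 1 / K)
    (hnet : ∀ p q : ℤ, |p| ≤ K ^ 2 → |q| ≤ K ^ 2 →
      |∑ j, (w j - 1) * symLoss (n / K * p * u j + n / K * q * v j)| ≤
        1 / K * (n + |n / K * p| + |n / K * q|))
    (a b : ℝ) :
    |∑ j, (w j - 1) * symLoss (a * u j + b * v j)| ≤ 14 / K * (n + |a| + |b|) := by
  have hK1 : (1 : ℝ) ≤ K := by exact_mod_cast hK
  have hK0 : (0 : ℝ) < K := by linarith
  have hinv : 1 / (K : ℝ) ≤ 1 := by rw [div_le_one hK0]; exact hK1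
  have hwu2 : ∑ j, (w j + 1) * |u j| ≤ 3 := by
    have e : ∑ j, (w j + 1) * |u j| = ∑ j, (w j - 1) * |u j| + 2 * ∑ j, |u j| := by
      rw [mul_sum, ← sum_add_distrib]; exact sum_congr rfl fun j _ => by ring
    linarith [le_abs_self (∑ j, (w j - 1) * |u j|)]
  have hwv2 : ∑ j, (w j + 1) * |v j| ≤ 3 := by
    have e : ∑ j, (w j + 1) * |v j| = ∑ j, (w j - 1) * |v j| + 2 * ∑ j, |v j| := by
      rw [mul_sum, ← sum_add_distrib]; exact sum_congr rfl fun j _ => by ring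
    linarith [le_abs_self (∑ j, (w j - 1) * |v j|)]
  have hwn2 : ∑ j, (w j + 1) ≤ 3 * n := by
    have e : ∑ j, (w j + 1) = n * ∑ j, (w j - 1) * (1 / n) + 2 * n := by
      have e' : ∑ j : ι, (2 : ℝ) = 2 * n := by
        rw [← hcard, sum_const, card_univ, nsmul_eq_mul, mul_comm]
      rw [← e', mul_sum, ← sum_add_distrib]
      exact sum_congr rfl fun j _ => by field_simp; ring
    have := mul_le_mul_of_nonneg_left ((le_abs_self _).trans (hwn.trans hinv)) hn.le
    linarith
  have round_coord : ∀ a : ℝ, |a| ≤ n * K → ∃ p : ℤ, |p| ≤ K ^ 2 ∧ |a - n / K * p| ≤ n / K := by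
    intro a ha
    have hx : |a * K / n| ≤ (K : ℝ) ^ 2 := by
      rw [abs_div, abs_mul, abs_of_pos hn, abs_of_pos hK0, div_le_iff₀ hn]
      nlinarith
    rw [abs_le] at hx
    have hfl := Int.floor_le (a * K / n)
    have hfl' := Int.lt_floor_add_one (a * K / n)
    refine ⟨⌊a * K / n⌋, abs_le.2 ⟨?_, ?_⟩, ?_⟩
    · rw [Int.le_floor]; push_cast; exact hx.1
    · have : ((⌊a * K / n⌋ : ℤ) : ℝ) ≤ ((K ^ 2 : ℤ) : ℝ) := by push_cast; linarith
      exact_mod_cast this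
    · have e : a - n / K * ⌊a * K / n⌋ = n / K * (a * K / n - ⌊a * K / n⌋) := by field_simp
      rw [e, abs_mul, abs_of_pos (by positivity : 0 < n / (K : ℝ)), abs_of_nonneg (by linarith)]
      exact mul_le_of_le_one_right (by positivity) (by linarith)
  have small : ∀ a b : ℝ, |a| ≤ n * K → |b| ≤ n * K →
      |∑ j, (w j - 1) * symLoss (a * u j + b * v j)| ≤ 1 / K * (9 * n + |a| + |b|) := by
    intro a b ha hb
    obtain ⟨p, hp, hap⟩ := round_coord a ha
    obtain ⟨q, hq, hbq⟩ := round_coord b hb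
    have h1 := hnet p q hp hq
    set a' := n / K * p
    set b' := n / K * q
    have hnK : n / K ≤ n := div_le_self hn.le hK1
    have ha' : |a'| ≤ |a| + n := by
      have := abs_sub_abs_le_abs_sub a' a
      rw [abs_sub_comm] at this; linarith
    have hb' : |b'| ≤ |b| + n := by
      have := abs_sub_abs_le_abs_sub b' b
      rw [abs_sub_comm] at this; linarith
    have h2 : |∑ j, (w j - 1) * symLoss (a * u j + b * v j) -
        ∑ j, (w j - 1) * symLoss (a' * u j + b' * v j)| ≤ n / K * 6 := by
      rw [← sum_sub_distrib]
      calc _ ≤ ∑ j, (n / K * ((w j + 1) * |u j|) + n / K * ((w j + 1) * |v j|)) := by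
            refine (abs_sum_le_sum_abs _ _).trans (sum_le_sum fun j _ => ?_)
            rw [← mul_sub, abs_mul]
            have e1 : |w j - 1| ≤ w j + 1 := by
              have := hw j
              rw [abs_le]; constructor <;> linarith
            have e2 := symLoss_lipschitz (a * u j + b * v j) (a' * u j + b' * v j)
            have e3 : |a * u j + b * v j - (a' * u j + b' * v j)| ≤
                n / K * |u j| + n / K * |v j| := by
              rw [show a * u j + b * v j - (a' * u j + b' * v j) =
                (a - a') * u j + (b - b') * v j by ring]
              refine (abs_add_le _ _).trans ?_
              rw [abs_mul, abs_mul]; gcongr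
            calc _ ≤ (w j + 1) * (n / K * |u j| + n / K * |v j|) := by
                  have := hw j
                  gcongr
                  exact e2.trans e3
              _ = _ := by ring
        _ ≤ n / K * 3 + n / K * 3 := by
            rw [sum_add_distrib, ← mul_sum, ← mul_sum]; gcongr
        _ = _ := by ring
    have h3 := abs_add_le (∑ j, (w j - 1) * symLoss (a * u j + b * v j) -
        ∑ j, (w j - 1) * symLoss (a' * u j + b' * v j))
        (∑ j, (w j - 1) * symLoss (a' * u j + b' * v j))
    rw [sub_add_cancel] at h3
    have h4 : 1 / K * (n + |a'| + |b'|) ≤ 1 / (K : ℝ) * (n + (|a| + n) + (|b| + n)) := by gcongr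
    calc _ ≤ n / K * 6 + 1 / (K : ℝ) * (n + (|a| + n) + (|b| + n)) := by linarith
      _ = _ := by ring
  by_cases hM : max |a| |b| ≤ n * K
  · refine (small a b ((le_max_left _ _).trans hM) ((le_max_right _ _).trans hM)).trans ?_
    rw [show (14 : ℝ) / K = 1 / K * 14 by ring, mul_assoc]
    gcongr
    have := abs_nonneg a
    have := abs_nonneg b
    linarith
  push Not at hM
  set M := max |a| |b| with hMdef
  have hMab : M ≤ n + |a| + |b| := by
    have := abs_nonneg a
    have := abs_nonneg b
    exact max_le (by linarith) (by linarith)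
  have hnK : 0 < n * K := by positivity
  set s := M / (n * K) with hs
  have hs1 : 1 < s := by rw [hs, one_lt_div hnK]; exact hM
  have hs0 : 0 < s := by linarith
  have hsM : s * (n * K) = M := by rw [hs]; field_simp
  have scale : ∀ c : ℝ, |c| ≤ M → |c / s| ≤ n * K := fun c hc => by
    rw [abs_div, abs_of_pos hs0, div_le_iff₀ hs0]; linarith
  have ha' := scale a (le_max_left _ _)
  have hb' := scale b (le_max_right _ _)
  have h1 := small _ _ ha' hb'
  have h2 : |∑ j, (w j - 1) * symLoss (a * u j + b * v j) -
      s * ∑ j, (w j - 1) * symLoss (a / s * u j + b / s * v j)| ≤ s * (3 * n) := by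
    rw [mul_sum, ← sum_sub_distrib]
    calc _ ≤ ∑ j, s * (w j + 1) := by
          refine (abs_sum_le_sum_abs _ _).trans (sum_le_sum fun j _ => ?_)
          set t := a / s * u j + b / s * v j with ht
          have e0 : a * u j + b * v j = s * t := by rw [ht]; field_simp
          rw [e0, show (w j - 1) * symLoss (s * t) - s * ((w j - 1) * symLoss t) =
            (w j - 1) * (symLoss (s * t) - s * symLoss t) by ring, abs_mul, mul_comm]
          have e1 : |w j - 1| ≤ w j + 1 := by
            have := hw j
            rw [abs_le]; constructor <;> linarith
          have e2 : |symLoss (s * t) - s * symLoss t| ≤ s := by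
            have f1 := half_abs_le_symLoss (s * t)
            have f2 := symLoss_le (s * t)
            rw [abs_mul, abs_of_pos hs0] at f1 f2
            have f3 := mul_le_mul_of_nonneg_left (half_abs_le_symLoss t) hs0.le
            have f4 := mul_le_mul_of_nonneg_left (symLoss_le t) hs0.le
            rw [abs_le]; constructor <;> linarith
          gcongr
      _ ≤ _ := by rw [← mul_sum]; gcongr
  have h3 := abs_add_le (∑ j, (w j - 1) * symLoss (a * u j + b * v j) -
      s * ∑ j, (w j - 1) * symLoss (a / s * u j + b / s * v j))
      (s * ∑ j, (w j - 1) * symLoss (a / s * u j + b / s * v j))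
  rw [sub_add_cancel, abs_mul, abs_of_pos hs0] at h3
  have h4 : s * |∑ j, (w j - 1) * symLoss (a / s * u j + b / s * v j)| ≤ s * (n * 11) := by
    gcongr
    calc _ ≤ 1 / K * (9 * n + n * K + n * K) := h1.trans (by gcongr)
      _ = 9 * (n * (1 / K)) + 2 * n := by field_simp; ring
      _ ≤ _ := by
        have := mul_le_mul_of_nonneg_left hinv hn.le
        linarith
  calc _ ≤ 14 * (s * n) := by linarith
    _ = 14 / K * M := by rw [← hsM]; field_simp
    _ ≤ _ := by gcongr

/-- Random sampling with probabilities proportional to `|u j| + |v j| + 1/n` yields sparse weights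
that are accurate both for the `m` signed linear forms and for `symLoss`, uniformly over the span
of `u` and `v`. The tests passed to `exists_sparse_weights` are the signed coordinate vectors
`Y i * u`, `Y i * v`, the vectors `|u|`, `|v|`, `1/n`, and the normalized losses at the grid points
of `symLoss_uniform`; there are `O(m K⁴)` of them, and `log (m K⁴) = O(K log m)`. -/
lemma exists_coreset_weights {n m : ℕ} (hn : 3 ≤ n) (hm : 3 ≤ m) (u v : Fin n → ℝ)
    (hu : ∑ j, |u j| ≤ 1) (hv : ∑ j, |v j| ≤ 1) (Y : Fin m → Fin n → ℝ)
    (hY : ∀ i j, |Y i j| = 1) (K : ℕ) (hK : 0 < K) :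
    ∃ w : Fin n → ℝ, (∀ j, 0 ≤ w j) ∧
      ((univ.filter fun j => w j ≠ 0).card : ℝ) ≤ 2449 * K ^ 3 * Real.log m ∧
      (∀ i a b, |∑ j, (w j - 1) * (Y i j * (a * u j + b * v j))| ≤ 1 / K * (|a| + |b|)) ∧
      ∀ a b, |∑ j, (w j - 1) * symLoss (a * u j + b * v j)| ≤ 14 / K * (n + |a| + |b|) := by
  have hK1 : (1 : ℝ) ≤ K := by exact_mod_cast hK
  have hK0 : (0 : ℝ) < K := by linarith
  have hn0 : (0 : ℝ) < n := by positivity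
  have hm3 : (3 : ℝ) ≤ m := by exact_mod_cast hm
  have hlogm : 1 ≤ Real.log m := by
    rw [Real.le_log_iff_exp_le (by linarith)]
    linarith [Real.exp_one_lt_d9]
  set Z := ∑ j, (|u j| + |v j| + 1 / n) with hZ
  have hZe : Z = ∑ j, |u j| + ∑ j, |v j| + 1 := by
    rw [hZ, sum_add_distrib, sum_add_distrib]; simp [hn0.ne']
  have hZ1 : 0 < Z := by
    rw [hZe]
    have h1 : 0 ≤ ∑ j, |u j| := sum_nonneg fun _ _ => abs_nonneg _
    have h2 : 0 ≤ ∑ j, |v j| := sum_nonneg fun _ _ => abs_nonneg _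
    linarith
  have hZ3 : Z ≤ 3 := by linarith
  let p : Fin n → ℝ := fun j => (|u j| + |v j| + 1 / n) / Z
  have hp : ∀ j, 0 < p j := fun j => by positivity
  have hpsum : ∑ j, p j = 1 := by
    simp only [p]; rw [← sum_div, ← hZ, div_self hZ1.ne']
  have hp3 : ∀ j, |u j| + |v j| + 1 / n ≤ 3 * p j := fun j => by
    have e : |u j| + |v j| + 1 / n = Z * p j := by simp only [p]; field_simp
    rw [e]
    exact mul_le_mul_of_nonneg_right hZ3 (hp j).le
  -- Grid points `(n / K) * q` for integers `|q| ≤ K²`, indexed with an offset of `K²`.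
  let g : Fin (2 * K ^ 2 + 1) → ℝ := fun s => n / K * ((s : ℝ) - K ^ 2)
  let ψ : (Fin m × Bool) ⊕ Bool ⊕ Unit ⊕ (Fin (2 * K ^ 2 + 1) × Fin (2 * K ^ 2 + 1)) →
      Fin n → ℝ :=
    Sum.elim (fun l j => Y l.1 j * cond l.2 (u j) (v j))
      (Sum.elim (fun l j => cond l |u j| |v j|)
        (Sum.elim (fun _ _ => 1 / n) fun l j =>
          symLoss (g l.1 * u j + g l.2 * v j) / (n + |g l.1| + |g l.2|)))
  have hψ : ∀ l j, |ψ l j| ≤ 3 * p j := by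
    intro l j
    refine le_trans ?_ (hp3 j)
    have h1 := abs_nonneg (u j)
    have h2 := abs_nonneg (v j)
    have h3 : 0 < 1 / (n : ℝ) := by positivity
    rcases l with ⟨i, b⟩ | b | _ | ⟨s, t⟩
    · simp only [ψ, Sum.elim_inl, abs_mul, hY, one_mul]
      cases b <;> simp only [cond_true, cond_false] <;> linarith
    · simp only [ψ, Sum.elim_inl, Sum.elim_inr]
      cases b <;> simp only [cond_true, cond_false, abs_abs] <;> linarith
    · simp only [ψ, Sum.elim_inl, Sum.elim_inr]
      rw [abs_of_pos h3]; linarith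
    · simp only [ψ, Sum.elim_inr]
      have h4 := abs_nonneg (g s)
      have h5 := abs_nonneg (g t)
      have h6 : 0 < n + |g s| + |g t| := by linarith
      have h7 := half_le_symLoss (g s * u j + g t * v j)
      rw [abs_div, abs_of_pos h6, abs_of_pos (by linarith), div_le_iff₀ h6]
      have h8 := symLoss_le (g s * u j + g t * v j)
      have h9 := abs_add_le (g s * u j) (g t * v j)
      rw [abs_mul (g s), abs_mul (g t)] at h9
      have h10 : 1 / (n : ℝ) * n = 1 := by field_simp
      nlinarith [mul_nonneg h1 h5, mul_nonneg h2 h4, mul_nonneg h1 h4, mul_nonneg h2 h5,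
        mul_nonneg h1 hn0.le, mul_nonneg h2 hn0.le, mul_nonneg h3.le h4, mul_nonneg h3.le h5]
  set k := ⌈2448 * (K : ℝ) ^ 3 * Real.log m⌉₊ with hk
  have hkpos : 0 < 2448 * (K : ℝ) ^ 3 * Real.log m := by positivity
  have hlog : Real.log (Fintype.card ((Fin m × Bool) ⊕ Bool ⊕ Unit ⊕
      (Fin (2 * K ^ 2 + 1) × Fin (2 * K ^ 2 + 1))) * 2) ≤ 17 * K * Real.log m := by
    have hK4 : (1 : ℝ) ≤ K ^ 4 := one_le_pow₀ hK1
    have hK2 : (1 : ℝ) ≤ K ^ 2 := one_le_pow₀ hK1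
    have h1 : ((Fintype.card ((Fin m × Bool) ⊕ Bool ⊕ Unit ⊕
      (Fin (2 * K ^ 2 + 1) × Fin (2 * K ^ 2 + 1))) : ℕ) : ℝ) * 2 ≤ 12 * m * K ^ 4 := by
      simp only [Fintype.card_sum, Fintype.card_prod, Fintype.card_fin, Fintype.card_bool,
        Fintype.card_unit]
      push_cast
      nlinarith [mul_nonneg (sub_nonneg.2 hm3) (sub_nonneg.2 hK4)]
    calc _ ≤ Real.log (12 * m * K ^ 4) := Real.log_le_log (by
          have : 0 < Fintype.card ((Fin m × Bool) ⊕ Bool ⊕ Unit ⊕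
            (Fin (2 * K ^ 2 + 1) × Fin (2 * K ^ 2 + 1))) := Fintype.card_pos
          positivity) h1
      _ = Real.log 12 + Real.log m + 4 * Real.log K := by
          rw [Real.log_mul (by positivity) (by positivity), Real.log_mul (by positivity)
            (by positivity), Real.log_pow]
          norm_num
      _ ≤ 12 + Real.log m + 4 * K := by
          gcongr
          · exact Real.log_le_self (by norm_num)
          · exact Real.log_le_self hK0.le
      _ ≤ _ := by
          nlinarith [mul_nonneg (sub_nonneg.2 hlogm) (sub_nonneg.2 hK1)]
  obtain ⟨w, hw, hcard, htest⟩ := exists_sparse_weights p hp hpsum ψ hψ K k hK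
    (Nat.ceil_pos.2 hkpos) (by
      refine le_trans ?_ (Nat.le_ceil _)
      calc _ ≤ 144 * (K : ℝ) ^ 2 * (17 * K * Real.log m) := by gcongr
        _ = _ := by ring)
  refine ⟨w, hw, ?_, ?_, ?_⟩
  · have h1 : ((univ.filter fun j => w j ≠ 0).card : ℝ) ≤ k := by exact_mod_cast hcard
    have h2 := Nat.ceil_lt_add_one hkpos.le
    have h3 : 1 ≤ (K : ℝ) ^ 3 * Real.log m :=
      one_le_mul_of_one_le_of_one_le (one_le_pow₀ hK1) hlogm
    linarith
  · intro i a b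
    have h1 : |∑ j, (w j - 1) * (Y i j * u j)| ≤ 1 / K := htest (Sum.inl (i, true))
    have h2 : |∑ j, (w j - 1) * (Y i j * v j)| ≤ 1 / K := htest (Sum.inl (i, false))
    have e : ∑ j, (w j - 1) * (Y i j * (a * u j + b * v j)) =
        a * ∑ j, (w j - 1) * (Y i j * u j) + b * ∑ j, (w j - 1) * (Y i j * v j) := by
      rw [mul_sum, mul_sum, ← sum_add_distrib]; exact sum_congr rfl fun j _ => by ring
    rw [e]
    refine (abs_add_le _ _).trans ?_
    rw [abs_mul, abs_mul]
    calc _ ≤ |a| * (1 / K) + |b| * (1 / (K : ℝ)) := by gcongr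
      _ = _ := by ring
  · refine symLoss_uniform n hn0 (by simp) u v w hu hv hw K hK
      (htest (Sum.inr (Sum.inl true))) (htest (Sum.inr (Sum.inl false)))
      (htest (Sum.inr (Sum.inr (Sum.inl ())))) ?_
    have idx : ∀ q : ℤ, |q| ≤ K ^ 2 → ∃ s, g s = n / K * q := by
      intro q hq
      rw [abs_le] at hq
      have hcast : ((K ^ 2 : ℕ) : ℤ) = (K : ℤ) ^ 2 := by push_cast; rfl
      refine ⟨⟨(q + K ^ 2).toNat, by omega⟩, ?_⟩
      have : (((q + K ^ 2).toNat : ℤ) : ℝ) = ((q + K ^ 2 : ℤ) : ℝ) := by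
        rw [Int.toNat_of_nonneg (by linarith)]
      simp only [g]
      rw [Int.cast_natCast] at this
      rw [this]; push_cast; ring
    intro q r hq hr
    obtain ⟨s, hs⟩ := idx q hq
    obtain ⟨t, ht⟩ := idx r hr
    have h1 : |∑ j, (w j - 1) * (symLoss (g s * u j + g t * v j) / (n + |g s| + |g t|))| ≤ 1 / K :=
      htest (Sum.inr (Sum.inr (Sum.inr (s, t))))
    rw [hs, ht] at h1
    have h6 : 0 < n + |(n : ℝ) / K * q| + |(n : ℝ) / K * r| := by positivity
    simp only [← mul_div_assoc] at h1
    rw [← sum_div, abs_div, abs_of_pos h6, div_le_iff₀ h6] at h1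
    simpa only [mul_div_assoc] using h1

/-- Coresets for the 2PL IRT model: there is an absolute constant `C > 0` such that for
all `n, m ≥ 3`, abilities `β`, labels `Y`, `μ ≥ 1` and `ε ∈ (0,1/2)`, if each matrix
`X_{(i)}` with rows `-Y i j • β j` is `μ`-complex in the ℓ₁ sense, then there is a
nonnegative weight vector supported on at most
`C (μ³/ε⁴)((log n)⁴ (log log n)⁴ + log m)` indices that is a `(1+ε)`-coreset
simultaneously for all `m` logistic objectives. -/
theorem stmt0 :
    ∃ C : ℝ, 0 < C ∧
      ∀ (n m : ℕ), 3 ≤ n → 3 ≤ m →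
      ∀ (β : Fin n → Fin 2 → ℝ) (Y : Fin m → Fin n → ℝ),
        (∀ i j, Y i j = 1 ∨ Y i j = -1) →
      ∀ μ ε : ℝ, 1 ≤ μ → 0 < ε → ε < 1 / 2 →
        (∀ i : Fin m, Mu1Complex (fun j k => -Y i j * β j k) μ) →
        ∃ w : Fin n → ℝ, (∀ j, 0 ≤ w j) ∧
          ((Finset.univ.filter fun j => w j ≠ 0).card : ℝ) ≤
            C * (μ ^ 3 / ε ^ 4) *
              ((Real.log n) ^ 4 * (Real.log (Real.log n)) ^ 4 + Real.log m) ∧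
          ∀ (i : Fin m) (η : Fin 2 → ℝ),
            |(∑ j, w j * Real.log (1 + Real.exp (-Y i j * (β j ⬝ᵥ η)))) -
                ∑ j, Real.log (1 + Real.exp (-Y i j * (β j ⬝ᵥ η)))| ≤
              ε * ∑ j, Real.log (1 + Real.exp (-Y i j * (β j ⬝ᵥ η))) := by
  refine ⟨2449 * 361 ^ 3, by norm_num, ?_⟩
  intro n m hn hm β Y hY μ ε hμ hε hε2 hc
  obtain ⟨u, v, hu, hv, huv⟩ := exists_well_conditioned (fun j => β j 0) (fun j => β j 1)
  have hμε : 1 ≤ μ / ε := by rw [le_div_iff₀ hε]; linarith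
  -- The total error is at most `(60 / K) * (n + ‖Bη‖₁) ≤ (360 μ / K) * f`; this `K` makes it `≤ ε f`.
  set K := ⌈360 * (μ / ε)⌉₊ with hKdef
  have hK : 0 < K := Nat.ceil_pos.2 (by positivity)
  have hK0 : (0 : ℝ) < K := by exact_mod_cast hK
  have hKge : 360 * (μ / ε) ≤ K := Nat.le_ceil _
  have hKle : (K : ℝ) ≤ 361 * (μ / ε) := by
    have := Nat.ceil_lt_add_one (show 0 ≤ 360 * (μ / ε) by positivity)
    linarith
  have hlogm : 0 ≤ Real.log m := Real.log_natCast_nonneg m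
  obtain ⟨w, hw, hcard, hlin, hsym⟩ := exists_coreset_weights hn hm u v hu hv Y
    (fun i j => by rcases hY i j with h | h <;> simp [h]) K hK
  refine ⟨w, hw, ?_, ?_⟩
  · have h1 : (K : ℝ) ^ 3 ≤ 361 ^ 3 * (μ ^ 3 / ε ^ 4) := by
      calc (K : ℝ) ^ 3 ≤ (361 * (μ / ε)) ^ 3 := by gcongr
        _ = 361 ^ 3 * (μ ^ 3 / ε ^ 3) := by ring
        _ ≤ _ := by
          have : ε ^ 4 ≤ ε ^ 3 := pow_le_pow_of_le_one hε.le (by linarith) (by norm_num)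
          gcongr
    calc _ ≤ 2449 * (K : ℝ) ^ 3 * Real.log m := hcard
      _ ≤ 2449 * (361 ^ 3 * (μ ^ 3 / ε ^ 4)) *
          ((Real.log n) ^ 4 * (Real.log (Real.log n)) ^ 4 + Real.log m) := by
        have h2 : 0 ≤ (Real.log n) ^ 4 * (Real.log (Real.log n)) ^ 4 := by positivity
        gcongr
        linarith
      _ = _ := by ring
  · intro i η
    have hlow := loss_lower β (Y i) (hY i) μ hμ (hc i) η
    set f := ∑ j, Real.log (1 + Real.exp (-Y i j * (β j ⬝ᵥ η)))
    obtain ⟨a, b, hab, ha, hb⟩ := huv (η 0) (η 1)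
    have hdot : ∀ j, β j ⬝ᵥ η = η 0 * β j 0 + η 1 * β j 1 := fun j => by
      simp [dotProduct, Fin.sum_univ_two, mul_comm]
    simp only [← hdot] at ha hb hab
    have e : (∑ j, w j * Real.log (1 + Real.exp (-Y i j * (β j ⬝ᵥ η)))) - f =
        ∑ j, (w j - 1) * symLoss (a * u j + b * v j) -
          1 / 2 * ∑ j, (w j - 1) * (Y i j * (a * u j + b * v j)) := by
      rw [← sum_sub_distrib, mul_sum, ← sum_sub_distrib]
      refine sum_congr rfl fun j _ => ?_
      rw [loss_eq _ _ (hY i j), hab j]; ring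
    rw [e]
    have h1 := hsym a b
    have h2 := hlin i a b
    have h3 := abs_sub (∑ j, (w j - 1) * symLoss (a * u j + b * v j))
      (1 / 2 * ∑ j, (w j - 1) * (Y i j * (a * u j + b * v j)))
    rw [abs_mul, abs_of_pos (by norm_num : (0 : ℝ) < 1 / 2)] at h3
    have hn0 : (0 : ℝ) ≤ n := Nat.cast_nonneg n
    have hf0 : 0 ≤ f := sum_nonneg fun j _ => Real.log_nonneg
      (by linarith [Real.exp_pos (-Y i j * (β j ⬝ᵥ η))])
    have hA0 : 0 ≤ ∑ j, |β j ⬝ᵥ η| := sum_nonneg fun _ _ => abs_nonneg _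
    have hKf : 360 * μ ≤ ε * K := by
      have := mul_le_mul_of_nonneg_left hKge hε.le
      calc _ = ε * (360 * (μ / ε)) := by field_simp
        _ ≤ _ := this
    calc _ ≤ 14 / K * (n + |a| + |b|) + 1 / 2 * (1 / K * (|a| + |b|)) := by linarith
      _ = 1 / K * (14 * n + 29 / 2 * (|a| + |b|)) := by ring
      _ ≤ 1 / K * (60 * (6 * μ * f)) := by
        refine mul_le_mul_of_nonneg_left ?_ (by positivity)
        linarith
      _ = (360 * μ) * f / K := by ring
      _ ≤ (ε * K) * f / K := by gcongr
      _ = ε * f := by field_simp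
end

section
/- Let m, n ≥ 3 be integers. There is an absolute constant C > 0 with the following property. Let α_1, …, α_m ∈ ℝ², guessing parameters c_1,…,c_m ∈ [c_min, 1/2) with c_min ∈ (0,1/2), E = max_{i∈[m]} ln(1/c_i), and Y ∈ {−1,1}^{m×n}. For j ∈ [n] let X_{(j)} ∈ ℝ^{m×2} have rows x_i = −Y_{ij}·α_iᵀ, let X'_{(j)} consist of the rows with Y_{ij} = −1 and X''_{(j)} of the rows with Y_{ij} = 1. Let μ ≥ 1 and ε ∈ (0,1/2). Assume for each j that X'_{(j)} and X''_{(j)} are each μ-complex in both the ℓ₀ and ℓ₁ sense, and that ‖X'_{(j)}η‖₁ ≤ 2μ·‖X''_{(j)}η‖₁ and ‖X''_{(j)}η‖₁ ≤ 2μ·‖X'_{(j)}η‖₁ for all η ∈ ℝ². Then there exists a nonnegative weight vector w ∈ ℝ^m whose support has size at most C·(1+E)·(μ²·√m/ε²)·((log m)² + log n), such that for every j ∈ [n] and every η ∈ ℝ²: |∑_{i: Y_{ij}=−1} w_i·g_{c_i}(x_i·η) + ∑_{i: Y_{ij}=1} w_i·h_{c_i}(x_i·η) − F_j(η)| ≤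 ε·F_j(η), where F_j(η) = ∑_{i: Y_{ij}=−1} g_{c_i}(x_i·η) + ∑_{i: Y_{ij}=1} h_{c_i}(x_i·η). -/
/-!
If `m` is below the claimed size, the weights `w = 1` work. Otherwise `√m` exceeds a large multiple of
`(1 + E) μ² / ε²`, so every quantity below is polynomial in `m`.

The losses are nonnegative, `1`-Lipschitz, at most `2 + |z|`, and homogeneous up to an additive
`2 + E`. Complexity gives `F_j(η) ≥ (m + ‖Aη‖₁) / (14 μ²)`, where `A` has rows `α_i` and `‖Aη‖₁` does
not depend on `j` (`objective_lower_bound`). Orthonormalising the columns of `A`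
(`exists_orthonormal_coords`) turns `α_i · η` into `x a_i + y b_i` with `∑ (|a_i| + |b_i|) ≤ 2 √m` and
`max |x| |y| ≤ ‖Aη‖₁`. Hence item `i` contributes at most a `14 μ² (2 / m + |a_i| + |b_i|)` fraction of
`F_j(η)`, for every `j` and `η`, and these bounds add up to `O(μ² √m)`.

Sampling each item independently with probability proportional to this bound (capped at `1`) and
weighting it by the inverse probability, a Chernoff bound and a union bound over the `n` examinees and
a grid of `m ^ 12` points `(x, y)` give all estimates at grid points with a sample of size
`O(μ² √m (log m + log n) / ε²)` (`exists_bernoulli_sample`). The weights are at most `m`, so the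
Lipschitz property extends the estimate to the square `|x|, |y| ≤ m³` (`deviation_le_of_grid`), and
asymptotic homogeneity extends it to the plane (`deviation_le_of_ball`).
-/

open Finset Matrix

/-- `g_c(z) = ln(1+e^z) - ln(1-c)`. -/
noncomputable def gfun (c z : ℝ) : ℝ := Real.log (1 + Real.exp z) - Real.log (1 - c)

/-- `h_c(z) = -ln(c + (1-c)/(1+e^{-z}))`. -/
noncomputable def hfun (c z : ℝ) : ℝ := -Real.log (c + (1 - c) / (1 + Real.exp (-z)))

/-- The submatrix of `x` with rows indexed by `s` is `μ`-complex in the ℓ₁ sense. -/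
def Mu1ComplexOn {N d : ℕ} (x : Fin N → Fin d → ℝ) (s : Finset (Fin N)) (μ : ℝ) : Prop :=
  ∀ η : Fin d → ℝ,
    ∑ i ∈ s.filter (fun i => 0 ≤ x i ⬝ᵥ η), x i ⬝ᵥ η ≤
      μ * ∑ i ∈ s.filter (fun i => x i ⬝ᵥ η < 0), |x i ⬝ᵥ η|

/-- The submatrix of `x` with rows indexed by `s` is `μ`-complex in the ℓ₀ sense. -/
def Mu0ComplexOn {N d : ℕ} (x : Fin N → Fin d → ℝ) (s : Finset (Fin N)) (μ : ℝ) : Prop :=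
  ∀ η : Fin d → ℝ, η ≠ 0 →
    ((s.filter (fun i => 0 ≤ x i ⬝ᵥ η)).card : ℝ) ≤
      μ * ((s.filter (fun i => x i ⬝ᵥ η < 0)).card : ℝ)

/-! ### Random sampling by averaging -/

/-- The probabilistic method for a random subset containing each `i` independently with probability
`p i`: the assumption bounds the expectation of
`∑ₑ k e * (∏_{i ∈ S} u e i) * ∏_{i ∉ S} v e i`, so some `S` does no worse than the average. -/
lemma exists_subset_of_avg {m : ℕ} {ι : Type*} (p : Fin m → ℝ) (h0 : ∀ i, 0 ≤ p i)
    (h1 : ∀ i, p i ≤ 1) (T : Finset ι) (k : ι → ℝ) (u v : ι → Fin m → ℝ)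
    (h : ∑ e ∈ T, k e * ∏ i, (p i * u e i + (1 - p i) * v e i) < 1) :
    ∃ S : Finset (Fin m), ∑ e ∈ T, k e * ((∏ i ∈ S, u e i) * ∏ i ∈ univ \ S, v e i) < 1 := by
  by_contra hS
  push Not at hS
  have hone : ∑ S ∈ (univ : Finset (Fin m)).powerset,
      ((∏ i ∈ S, p i) * ∏ i ∈ univ \ S, (1 - p i)) = 1 := by
    rw [← Finset.prod_add]; simp
  have key : ∑ e ∈ T, k e * ∏ i, (p i * u e i + (1 - p i) * v e i)
      = ∑ S ∈ (univ : Finset (Fin m)).powerset,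
        ((∏ i ∈ S, p i) * ∏ i ∈ univ \ S, (1 - p i)) *
          ∑ e ∈ T, k e * ((∏ i ∈ S, u e i) * ∏ i ∈ univ \ S, v e i) := by
    simp_rw [Finset.prod_add, Finset.mul_sum]
    rw [Finset.sum_comm]
    refine Finset.sum_congr rfl fun S _ => Finset.sum_congr rfl fun e _ => ?_
    rw [Finset.prod_mul_distrib, Finset.prod_mul_distrib]; ring
  have : (1 : ℝ) ≤ ∑ e ∈ T, k e * ∏ i, (p i * u e i + (1 - p i) * v e i) := by
    rw [key]
    refine hone.symm.le.trans (Finset.sum_le_sum fun S _ => ?_)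
    refine le_mul_of_one_le_right ?_ (hS S)
    exact mul_nonneg (Finset.prod_nonneg fun i _ => h0 i)
      (Finset.prod_nonneg fun i _ => sub_nonneg.2 (h1 i))
  linarith

/-- Moment generating function of one centred sampled term: the variable equals `f / p` with
probability `p` and `0` otherwise, so it has mean `f`. When `p = 1` it is constant and no upper bound
on `f` is needed. -/
lemma bernoulli_mgf (p f M τ : ℝ) (hp : 0 < p) (hp1 : p ≤ 1) (hf : 0 ≤ f) (hM : 0 < M)
    (hfM : p < 1 → f ≤ p * M) (hτ : |τ| ≤ 1) :
    p * Real.exp (τ / M * (f / p - f)) + (1 - p) * Real.exp (τ / M * (0 - f))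
      ≤ Real.exp (τ ^ 2 * f / M) := by
  rcases hp1.lt_or_eq with h | h
  · have hfM' := hfM h
    set y := τ * (f / (p * M)) with hy
    have hq : f / (p * M) ≤ 1 := (div_le_one (by positivity)).2 hfM'
    have hq0 : 0 ≤ f / (p * M) := by positivity
    have hy1 : |y| ≤ 1 := by
      rw [hy, abs_mul, abs_of_nonneg hq0]
      exact mul_le_one₀ hτ hq0 hq
    have hexp : Real.exp y ≤ 1 + y + y ^ 2 := by
      have := (abs_le.1 (Real.abs_exp_sub_one_sub_id_le hy1)).2
      linarith
    have e1 : τ / M * (f / p - f) = y - p * y := by rw [hy]; field_simp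
    have e2 : τ / M * (0 - f) = - (p * y) := by rw [hy]; field_simp; ring
    rw [e1, e2, sub_eq_add_neg, Real.exp_add]
    have e3 : p * y ^ 2 ≤ τ ^ 2 * f / M := by
      have : p * y ^ 2 = τ ^ 2 * f / M * (f / (p * M)) := by rw [hy]; field_simp
      rw [this]
      exact mul_le_of_le_one_right (by positivity) hq
    calc p * (Real.exp y * Real.exp (-(p * y))) + (1 - p) * Real.exp (-(p * y))
        = (1 + p * (Real.exp y - 1)) * Real.exp (-(p * y)) := by ring
      _ ≤ Real.exp (p * y + p * y ^ 2) * Real.exp (-(p * y)) := by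
          gcongr
          have := Real.add_one_le_exp (p * y + p * y ^ 2)
          nlinarith
      _ = Real.exp (p * y ^ 2) := by rw [← Real.exp_add]; ring_nf
      _ ≤ _ := Real.exp_le_exp.2 e3
  · subst h
    simp
    positivity

/-- Multiplicative Chernoff bound with a union bound over the test vectors `f e`, `e ∈ T`: if no
randomly sampled term `f e i / p i` exceeds `(∑ f e) / Λ`, some sample `S` with weights `1 / p i`
estimates all sums up to the factor `1 ± ε`, and has not much more than the expected size. -/
lemma exists_bernoulli_sample {m : ℕ} {κ : Type*} (p : Fin m → ℝ) (h0 : ∀ i, 0 < p i)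
    (h1 : ∀ i, p i ≤ 1) (T : Finset κ) (f : κ → Fin m → ℝ) (ε Λ : ℝ) (hε : 0 < ε)
    (hε1 : ε ≤ 1) (hΛ : 0 < Λ) (hf : ∀ e ∈ T, ∀ i, 0 ≤ f e i)
    (hF : ∀ e ∈ T, 0 < ∑ i, f e i)
    (hfp : ∀ e ∈ T, ∀ i, p i < 1 → f e i * Λ ≤ p i * ∑ i, f e i)
    (hT : 8 * (T.card : ℝ) ≤ Real.exp (ε ^ 2 * Λ / 4)) :
    ∃ S : Finset (Fin m), (S.card : ℝ) ≤ 2 * ∑ i, p i + 2 ∧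
      ∀ e ∈ T, |∑ i, (if i ∈ S then 1 / p i else 0) * f e i - ∑ i, f e i| ≤
        ε * ∑ i, f e i := by
  classical
  let F : κ → ℝ := fun e => ∑ i, f e i
  let τ : Bool → ℝ := fun b => if b then ε / 2 else -(ε / 2)
  have hτ2 : ∀ b, τ b ^ 2 = ε ^ 2 / 4 := by intro b; cases b <;> simp [τ] <;> ring
  have hτ1 : ∀ b, |τ b| ≤ 1 := by
    intro b
    have : |ε / 2| ≤ 1 := by rw [abs_of_pos (by positivity)]; linarith
    cases b <;> simpa [τ, abs_neg] using this
  -- The index `none` stands for the event that the sample is too large, and `some (e, b)` for the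
  -- upper (`b = true`) or lower (`b = false`) deviation of the estimate of `∑ f e`. With the factors
  -- `k`, an event takes place only if its term is at least `1`.
  let T' : Finset (Option (κ × Bool)) := insertNone (T ×ˢ univ)
  let k : Option (κ × Bool) → ℝ := fun o => o.elim (Real.exp (-∑ i, p i) / 4)
    fun _ => Real.exp (-(ε ^ 2 * Λ / 2))
  let u : Option (κ × Bool) → Fin m → ℝ := fun o i => o.elim 2
    fun q => Real.exp (τ q.2 / (F q.1 / Λ) * (f q.1 i / p i - f q.1 i))
  let v : Option (κ × Bool) → Fin m → ℝ := fun o i => o.elim 1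
    fun q => Real.exp (τ q.2 / (F q.1 / Λ) * (0 - f q.1 i))
  have hk : ∀ o, 0 < k o := by rintro (_ | _) <;> simp only [k, Option.elim] <;> positivity
  have hu : ∀ o i, 0 < u o i := by rintro (_ | _) i <;> simp only [u, Option.elim] <;> positivity
  have hv : ∀ o i, 0 < v o i := by rintro (_ | _) i <;> simp only [v, Option.elim] <;> positivity
  have hnone : k none * ∏ i, (p i * u none i + (1 - p i) * v none i) ≤ 1 / 4 := by
    have : ∏ i, (p i * u none i + (1 - p i) * v none i) ≤ Real.exp (∑ i, p i) := by
      rw [Real.exp_sum]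
      refine Finset.prod_le_prod (fun i _ => ?_) fun i _ => ?_
      · have := h0 i; simp only [u, v, Option.elim]; linarith
      · have := Real.add_one_le_exp (p i); simp only [u, v, Option.elim]; linarith
    calc k none * _ ≤ Real.exp (-∑ i, p i) / 4 * Real.exp (∑ i, p i) := by
          simp only [k, Option.elim] at *; gcongr
      _ = 1 / 4 := by rw [div_mul_eq_mul_div, ← Real.exp_add]; simp
  have hsome : ∀ q ∈ T ×ˢ (univ : Finset Bool),
      k (some q) * ∏ i, (p i * u (some q) i + (1 - p i) * v (some q) i)
        ≤ Real.exp (-(ε ^ 2 * Λ / 4)) := by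
    rintro ⟨e, b⟩ hq
    have he : e ∈ T := (Finset.mem_product.1 hq).1
    have hFe : 0 < F e := hF e he
    have : ∏ i, (p i * u (some (e, b)) i + (1 - p i) * v (some (e, b)) i)
        ≤ Real.exp (ε ^ 2 * Λ / 4) := by
      have e1 : ε ^ 2 * Λ / 4 = ∑ i, τ b ^ 2 * f e i / (F e / Λ) := by
        rw [← Finset.sum_div, ← Finset.mul_sum, hτ2]
        change _ = ε ^ 2 / 4 * F e / (F e / Λ)
        field_simp
      rw [e1, Real.exp_sum]
      refine Finset.prod_le_prod (fun i _ => ?_) fun i _ => ?_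
      · have a1 := hu (some (e, b)) i
        have a2 := hv (some (e, b)) i
        have a3 := h0 i
        have a4 : 0 ≤ 1 - p i := sub_nonneg.2 (h1 i)
        positivity
      · refine bernoulli_mgf (p i) (f e i) (F e / Λ) (τ b) (h0 i) (h1 i) (hf e he i)
          (by positivity) (fun hp => ?_) (hτ1 b)
        rw [← mul_div_assoc, le_div_iff₀ hΛ]
        exact hfp e he i hp
    calc k (some (e, b)) * _ ≤ Real.exp (-(ε ^ 2 * Λ / 2)) * Real.exp (ε ^ 2 * Λ / 4) := by
          simp only [k, Option.elim] at *; gcongr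
      _ = _ := by rw [← Real.exp_add]; ring_nf
  have htot : ∑ o ∈ T', k o * ∏ i, (p i * u o i + (1 - p i) * v o i) < 1 := by
    have h2 := Finset.sum_le_card_nsmul _ _ _ hsome
    rw [nsmul_eq_mul, Finset.card_product] at h2
    have h3 : ((T.card * (univ : Finset Bool).card : ℕ) : ℝ) * Real.exp (-(ε ^ 2 * Λ / 4))
        ≤ 1 / 4 := by
      rw [Real.exp_neg, ← div_eq_mul_inv, div_le_iff₀ (Real.exp_pos _)]
      push_cast
      simp
      linarith
    simp only [T']
    rw [Finset.sum_insertNone]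
    linarith
  obtain ⟨S, hS⟩ := exists_subset_of_avg p (fun i => (h0 i).le) h1 T' k u v htot
  have hpos : ∀ o, 0 < k o * ((∏ i ∈ S, u o i) * ∏ i ∈ univ \ S, v o i) := fun o =>
    mul_pos (hk o) (mul_pos (Finset.prod_pos fun i _ => hu o i) (Finset.prod_pos fun i _ => hv o i))
  have hS' : ∀ o ∈ T', k o * ((∏ i ∈ S, u o i) * ∏ i ∈ univ \ S, v o i) < 1 := fun o ho =>
    (Finset.single_le_sum (f := fun o => k o * ((∏ i ∈ S, u o i) * ∏ i ∈ univ \ S, v o i))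
      (fun o _ => (hpos o).le) ho).trans_lt hS
  refine ⟨S, ?_, fun e he => ?_⟩
  · have h4 := hS' none (by simp [T'])
    simp only [k, u, v, Option.elim, Finset.prod_const, one_pow, mul_one] at h4
    -- taking logarithms in `2 ^ #S < 4 * exp (∑ p i)`
    have h5 : (2 : ℝ) ^ S.card < 4 * Real.exp (∑ i, p i) := by
      rw [Real.exp_neg] at h4
      have := Real.exp_pos (∑ i, p i)
      field_simp at h4
      linarith
    have h6 := Real.log_lt_log (by positivity) h5
    rw [Real.log_pow, Real.log_mul (by norm_num) (Real.exp_pos _).ne', Real.log_exp,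
      show (4 : ℝ) = 2 ^ 2 by norm_num, Real.log_pow] at h6
    have hl := Real.log_two_gt_d9
    have hp0 : 0 ≤ ∑ i, p i := Finset.sum_nonneg fun i _ => (h0 i).le
    push_cast at h6
    by_contra hc
    push Not at hc
    nlinarith
  · have hFe : 0 < F e := hF e he
    have hdev : ∀ b, τ b * (∑ i, (if i ∈ S then 1 / p i else 0) * f e i - F e)
        ≤ ε / 2 * (ε * F e) := by
      intro b
      have h4 := hS' (some (e, b)) (by simp [T', he])
      have h5 : (∏ i ∈ S, u (some (e, b)) i) * ∏ i ∈ univ \ S, v (some (e, b)) i =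
          Real.exp (τ b / (F e / Λ) *
            (∑ i, (if i ∈ S then 1 / p i else 0) * f e i - F e)) := by
        have h6 : ∀ i, (if i ∈ S then u (some (e, b)) i else v (some (e, b)) i) =
            Real.exp (τ b / (F e / Λ) * ((if i ∈ S then 1 / p i else 0) * f e i - f e i)) := by
          intro i
          split_ifs <;> simp only [u, v, Option.elim] <;> congr 2 <;> ring
        rw [show (∑ i, (if i ∈ S then 1 / p i else 0) * f e i - F e) =
          ∑ i, ((if i ∈ S then 1 / p i else 0) * f e i - f e i) from by
            rw [Finset.sum_sub_distrib], Finset.mul_sum, Real.exp_sum]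
        simp_rw [← h6]
        rw [Finset.prod_ite]
        congr 2 <;> ext i <;> simp
      rw [h5] at h4
      simp only [k, Option.elim] at h4
      rw [← Real.exp_add, Real.exp_lt_one_iff] at h4
      have h7 : τ b / (F e / Λ) * (∑ i, (if i ∈ S then 1 / p i else 0) * f e i - F e)
          = Λ / F e * (τ b * (∑ i, (if i ∈ S then 1 / p i else 0) * f e i - F e)) := by
        field_simp
      have h8 : ε ^ 2 * Λ / 2 = Λ / F e * (ε / 2 * (ε * F e)) := by field_simp
      rw [h7, h8] at h4
      have : 0 < Λ / F e := by positivity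
      exact le_of_mul_le_mul_left (by linarith) this
    have ht := hdev true
    have hf' := hdev false
    simp only [τ] at ht hf'
    simp only [if_true, Bool.false_eq_true, if_false] at ht hf'
    change |_ - F e| ≤ ε * F e
    rw [abs_le]
    have : 0 < ε / 2 := by positivity
    constructor <;> nlinarith

/-! ### Coresets for Lipschitz losses -/

lemma abs_comb_le (a b x y : ℝ) : |x * a + y * b| ≤ max |x| |y| * (|a| + |b|) := by
  calc |x * a + y * b| ≤ |x| * |a| + |y| * |b| := by
        rw [← abs_mul, ← abs_mul]; exact abs_add_le _ _
    _ ≤ max |x| |y| * |a| + max |x| |y| * |b| := by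
        gcongr; exacts [le_max_left _ _, le_max_right _ _]
    _ = _ := by ring

/-- From grid points to the square `|x|, |y| ≤ m³`. Rounding to the grid of mesh `1 / m²` changes
the objective and the deviation by at most `2` each, because the losses are `1`-Lipschitz and
`|w i - 1| ≤ m`; by `hF` and `hreg` this is absorbed by `ε` times the objective. -/
lemma deviation_le_of_grid {m : ℕ} (hm : 3 ≤ m)
    (a b : Fin m → ℝ) (hab : ∑ i, (|a i| + |b i|) ≤ 2 * Real.sqrt m)
    (φ : Fin m → ℝ → ℝ) (μ ε K : ℝ) (hμ : 1 ≤ μ) (hε : 0 < ε) (hε1 : ε < 1 / 2) (hK : 1 ≤ K)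
    (hφL : ∀ i z z', |φ i z - φ i z'| ≤ |z - z'|)
    (hF : ∀ x y, m + max |x| |y| ≤ K * μ ^ 2 * ∑ i, φ i (x * a i + y * b i))
    (hreg : 16 * K * μ ^ 2 ≤ ε * m) (w : Fin m → ℝ) (hw : ∀ i, |w i - 1| ≤ m)
    (hgrid : ∀ r ∈ Finset.Icc (-(m : ℤ) ^ 5) ((m : ℤ) ^ 5),
      ∀ r' ∈ Finset.Icc (-(m : ℤ) ^ 5) ((m : ℤ) ^ 5),
      |∑ i, (w i - 1) * φ i (r / (m : ℝ) ^ 2 * a i + r' / (m : ℝ) ^ 2 * b i)| ≤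
        ε / 4 * ∑ i, φ i (r / (m : ℝ) ^ 2 * a i + r' / (m : ℝ) ^ 2 * b i))
    (x y : ℝ) (hx : |x| ≤ (m : ℝ) ^ 3) (hy : |y| ≤ (m : ℝ) ^ 3) :
    |∑ i, (w i - 1) * φ i (x * a i + y * b i)| ≤ ε / 2 * ∑ i, φ i (x * a i + y * b i) := by
  set s : Fin m → ℝ := fun i => |a i| + |b i| with hs
  have hs0 : ∀ i, 0 ≤ s i := fun i => by positivity
  have hmR : (3 : ℝ) ≤ m := by exact_mod_cast hm
  have hm0 : (0 : ℝ) < m := by linarith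
  have hsqm : Real.sqrt m ≤ m := by rw [Real.sqrt_le_iff]; constructor <;> nlinarith
  have hm2 : (0 : ℝ) < (m : ℝ) ^ 2 := by positivity
  have hround : ∀ t : ℝ, |t| ≤ (m : ℝ) ^ 3 →
      ∃ r ∈ Finset.Icc (-(m : ℤ) ^ 5) ((m : ℤ) ^ 5), |t - (r : ℝ) / (m : ℝ) ^ 2| ≤ 1 / (m : ℝ) ^ 2 := by
    intro t ht
    have h1 := abs_le.1 ht
    refine ⟨⌊t * (m : ℝ) ^ 2⌋, ?_, ?_⟩
    · rw [Finset.mem_Icc]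
      have e5 : (m : ℝ) ^ 5 = m ^ 3 * m ^ 2 := by ring
      constructor
      · rw [Int.le_floor]; push_cast; nlinarith
      · have : (⌊t * (m : ℝ) ^ 2⌋ : ℝ) ≤ ((m : ℤ) ^ 5 : ℤ) := by
          refine (Int.floor_le _).trans ?_
          push_cast; nlinarith
        exact_mod_cast this
    · have h2 := Int.floor_le (t * (m : ℝ) ^ 2)
      have h3 := Int.lt_floor_add_one (t * (m : ℝ) ^ 2)
      rw [show t - (⌊t * (m : ℝ) ^ 2⌋ : ℝ) / (m : ℝ) ^ 2 =
        (t * (m : ℝ) ^ 2 - ⌊t * (m : ℝ) ^ 2⌋) / (m : ℝ) ^ 2 by field_simp, abs_div,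
        abs_of_pos hm2]
      gcongr
      rw [abs_le]; constructor <;> linarith
  obtain ⟨r, hr, hxr⟩ := hround x hx
  obtain ⟨r', hr', hyr⟩ := hround y hy
  set x' := (r : ℝ) / (m : ℝ) ^ 2
  set y' := (r' : ℝ) / (m : ℝ) ^ 2
  have hg := hgrid r hr r' hr'
  have hdiff : ∑ i, |φ i (x * a i + y * b i) - φ i (x' * a i + y' * b i)| ≤ 2 / m := by
    calc ∑ i, |φ i (x * a i + y * b i) - φ i (x' * a i + y' * b i)|
        ≤ ∑ i, 1 / (m : ℝ) ^ 2 * s i := by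
          refine Finset.sum_le_sum fun i _ => (hφL i _ _).trans ?_
          rw [show x * a i + y * b i - (x' * a i + y' * b i) =
            (x - x') * a i + (y - y') * b i by ring]
          refine (abs_comb_le (a i) (b i) _ _).trans ?_
          exact mul_le_mul_of_nonneg_right (max_le hxr hyr) (hs0 i)
      _ = 1 / (m : ℝ) ^ 2 * ∑ i, s i := by rw [Finset.mul_sum]
      _ ≤ 1 / (m : ℝ) ^ 2 * (2 * m) := by gcongr; linarith
      _ = 2 / m := by field_simp
  have hX : |∑ i, (w i - 1) * φ i (x * a i + y * b i) -
      ∑ i, (w i - 1) * φ i (x' * a i + y' * b i)| ≤ 2 := by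
    rw [← Finset.sum_sub_distrib]
    calc _ ≤ ∑ i, |(w i - 1) * φ i (x * a i + y * b i) -
            (w i - 1) * φ i (x' * a i + y' * b i)| := Finset.abs_sum_le_sum_abs _ _
      _ ≤ ∑ i, m * |φ i (x * a i + y * b i) - φ i (x' * a i + y' * b i)| := by
          refine Finset.sum_le_sum fun i _ => ?_
          rw [← mul_sub, abs_mul]
          gcongr; exact hw i
      _ ≤ m * (2 / m) := by rw [← Finset.mul_sum]; gcongr
      _ = 2 := by field_simp
  have hFd : |∑ i, φ i (x * a i + y * b i) - ∑ i, φ i (x' * a i + y' * b i)| ≤ 2 := by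
    rw [← Finset.sum_sub_distrib]
    refine (Finset.abs_sum_le_sum_abs _ _).trans (hdiff.trans ?_)
    rw [div_le_iff₀ hm0]; linarith
  have h1 := hF x y
  have h2 : 0 ≤ max |x| |y| := le_max_of_le_left (abs_nonneg _)
  set F := ∑ i, φ i (x * a i + y * b i)
  set F' := ∑ i, φ i (x' * a i + y' * b i)
  have h3 : 16 ≤ ε * F := by
    have h4 : 0 < K * μ ^ 2 := by positivity
    refine le_of_mul_le_mul_left ?_ h4
    calc K * μ ^ 2 * 16 ≤ ε * m := by linarith
      _ ≤ ε * (K * μ ^ 2 * F) := by gcongr; linarith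
      _ = _ := by ring
  change |∑ i, (w i - 1) * φ i (x' * a i + y' * b i)| ≤ ε / 4 * F' at hg
  have h5 := abs_le.1 hg
  have h6 := abs_le.1 hX
  have h7 := abs_le.1 hFd
  rw [abs_le]; constructor <;> nlinarith

/-- From the square `|x|, |y| ≤ m³` to the whole plane. A point outside is `t ≥ 1` times a point of
the square; the losses are homogeneous up to `t * B`, so scaling costs at most `m² t B`, which `hreg`
makes small against the lower bound `hF`, now at least of order `t m³ / μ²`. -/
lemma deviation_le_of_ball {m : ℕ} (hm : 3 ≤ m) (a b : Fin m → ℝ)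
    (φ : Fin m → ℝ → ℝ) (μ ε B K : ℝ) (hμ : 1 ≤ μ) (hε : 0 < ε) (hε1 : ε < 1 / 2) (hK : 1 ≤ K)
    (hφB : ∀ i z t, 1 ≤ t → |φ i (t * z) - t * φ i z| ≤ t * B)
    (hF : ∀ x y, m + max |x| |y| ≤ K * μ ^ 2 * ∑ i, φ i (x * a i + y * b i))
    (hreg : 4 * K * B * μ ^ 2 ≤ ε * m) (w : Fin m → ℝ) (hw : ∀ i, |w i - 1| ≤ m)
    (hball : ∀ x y, |x| ≤ (m : ℝ) ^ 3 → |y| ≤ (m : ℝ) ^ 3 →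
      |∑ i, (w i - 1) * φ i (x * a i + y * b i)| ≤ ε / 2 * ∑ i, φ i (x * a i + y * b i))
    (x y : ℝ) :
    |∑ i, (w i - 1) * φ i (x * a i + y * b i)| ≤ ε * ∑ i, φ i (x * a i + y * b i) := by
  have hmR : (3 : ℝ) ≤ m := by exact_mod_cast hm
  have hm0 : (0 : ℝ) < m := by linarith
  set ρ := max |x| |y| with hρ
  have hxρ : |x| ≤ ρ := le_max_left _ _
  have hyρ : |y| ≤ ρ := le_max_right _ _
  have hFp := pos_of_mul_pos_right (a := K * μ ^ 2)
    (show 0 < _ from lt_of_lt_of_le (by positivity) (hF x y)) (by positivity)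
  by_cases hc : ρ ≤ (m : ℝ) ^ 3
  · have := hball x y (hxρ.trans hc) (hyρ.trans hc)
    nlinarith
  push Not at hc
  have hm3 : (0 : ℝ) < (m : ℝ) ^ 3 := by positivity
  obtain ⟨t, ht, htρ⟩ : ∃ t : ℝ, 1 ≤ t ∧ ρ = t * (m : ℝ) ^ 3 :=
    ⟨ρ / (m : ℝ) ^ 3, (one_le_div hm3).2 hc.le, by field_simp⟩
  have ht0 : 0 < t := by linarith
  have hB0 : 0 ≤ B := by
    have := (abs_nonneg _).trans (hφB ⟨0, by omega⟩ 0 1 le_rfl); linarith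
  have hsm : ∀ r : ℝ, |r| ≤ ρ → |r / t| ≤ (m : ℝ) ^ 3 := fun r hr => by
    rw [abs_div, abs_of_pos ht0, div_le_iff₀ ht0]; linarith
  have hb := hball (x / t) (y / t) (hsm x hxρ) (hsm y hyρ)
  have hscale : ∀ i, |φ i (x * a i + y * b i) - t * φ i (x / t * a i + y / t * b i)|
      ≤ t * B := fun i => by
    have := hφB i (x / t * a i + y / t * b i) t ht
    rwa [show t * (x / t * a i + y / t * b i) = x * a i + y * b i by field_simp] at this
  have hX : |∑ i, (w i - 1) * φ i (x * a i + y * b i) -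
      t * ∑ i, (w i - 1) * φ i (x / t * a i + y / t * b i)| ≤ m * (m * (t * B)) := by
    rw [Finset.mul_sum, ← Finset.sum_sub_distrib]
    calc _ ≤ ∑ i, |(w i - 1) * φ i (x * a i + y * b i) -
            t * ((w i - 1) * φ i (x / t * a i + y / t * b i))| :=
          Finset.abs_sum_le_sum_abs _ _
      _ ≤ ∑ i : Fin m, m * (t * B) := by
          refine Finset.sum_le_sum fun i _ => ?_
          rw [show (w i - 1) * φ i (x * a i + y * b i) -
            t * ((w i - 1) * φ i (x / t * a i + y / t * b i)) =
            (w i - 1) * (φ i (x * a i + y * b i) -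
              t * φ i (x / t * a i + y / t * b i)) by ring, abs_mul]
          exact mul_le_mul (hw i) (hscale i) (abs_nonneg _) hm0.le
      _ = m * (m * (t * B)) := by simp
  have hFd : |∑ i, φ i (x * a i + y * b i) - t * ∑ i, φ i (x / t * a i + y / t * b i)|
      ≤ m * (t * B) := by
    rw [Finset.mul_sum, ← Finset.sum_sub_distrib]
    calc _ ≤ ∑ i, |φ i (x * a i + y * b i) - t * φ i (x / t * a i + y / t * b i)| :=
          Finset.abs_sum_le_sum_abs _ _
      _ ≤ ∑ i : Fin m, t * B := Finset.sum_le_sum fun i _ => hscale i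
      _ = m * (t * B) := by simp
  have h1 := hF x y
  set F := ∑ i, φ i (x * a i + y * b i)
  set F' := ∑ i, φ i (x / t * a i + y / t * b i)
  set X' := ∑ i, (w i - 1) * φ i (x / t * a i + y / t * b i)
  have htB : 0 ≤ t * B := by positivity
  have h3 : 4 * (m * (m * (t * B))) ≤ ε * F := by
    have h4 : 0 < K * μ ^ 2 := by positivity
    refine le_of_mul_le_mul_left ?_ h4
    calc K * μ ^ 2 * (4 * (m * (m * (t * B)))) = (4 * K * B * μ ^ 2) * (t * m ^ 2) := by ring
      _ ≤ ε * m * (t * m ^ 2) := by gcongr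
      _ = ε * ρ := by rw [htρ]; ring
      _ ≤ ε * (K * μ ^ 2 * F) := by gcongr; linarith
      _ = _ := by ring
  have h4 : m * (t * B) ≤ m * (m * (t * B)) :=
    mul_le_mul_of_nonneg_left (le_mul_of_one_le_left htB (by linarith)) hm0.le
  have h5 : |t * X'| ≤ ε / 2 * (t * F') := by
    rw [abs_mul, abs_of_pos ht0]; nlinarith
  have h6 := abs_le.1 h5
  have h7 := abs_le.1 hX
  have h8 := abs_le.1 hFd
  rw [abs_le]; constructor <;> nlinarith

/-- Coreset for general nonnegative `1`-Lipschitz, asymptotically homogeneous losses `φ i j`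
evaluated at `x a_i + y b_i`. Item `i` has sensitivity at most `K μ² (2 / m + |a_i| + |b_i|)`, and it
is sampled with probability `min 1 (k (2 / m + |a_i| + |b_i|))`. The test vectors are the losses at
the grid points `(r, r') / m²` with `|r|, |r'| ≤ m⁵`. -/
lemma exists_coreset_of_lipschitz {m n : ℕ} (hm : 3 ≤ m) (hn : 3 ≤ n)
    (a b : Fin m → ℝ) (hab : ∑ i, (|a i| + |b i|) ≤ 2 * Real.sqrt m)
    (φ : Fin m → Fin n → ℝ → ℝ) (μ ε B K : ℝ) (hμ : 1 ≤ μ) (hε : 0 < ε) (hε1 : ε < 1 / 2)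
    (hK : 1 ≤ K)
    (hφ0 : ∀ i j z, 0 ≤ φ i j z) (hφ1 : ∀ i j z, φ i j z ≤ 2 + |z|)
    (hφL : ∀ i j z z', |φ i j z - φ i j z'| ≤ |z - z'|)
    (hφB : ∀ i j z t, 1 ≤ t → |φ i j (t * z) - t * φ i j z| ≤ t * B)
    (hF : ∀ j x y, m + max |x| |y| ≤ K * μ ^ 2 * ∑ i, φ i j (x * a i + y * b i))
    (hreg1 : 16 * K * μ ^ 2 ≤ ε * m) (hreg2 : 4 * K * B * μ ^ 2 ≤ ε * m) :
    ∃ w : Fin m → ℝ, (∀ i, 0 ≤ w i) ∧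
      ((Finset.univ.filter fun i => w i ≠ 0).card : ℝ) ≤
        12 * (1024 * K * μ ^ 2 * (Real.log m + Real.log n) / ε ^ 2) * Real.sqrt m ∧
      ∀ j x y, |∑ i, w i * φ i j (x * a i + y * b i) - ∑ i, φ i j (x * a i + y * b i)| ≤
        ε * ∑ i, φ i j (x * a i + y * b i) := by
  classical
  set s : Fin m → ℝ := fun i => |a i| + |b i| with hs
  have hs0 : ∀ i, 0 ≤ s i := fun i => by positivity
  have hmR : (3 : ℝ) ≤ m := by exact_mod_cast hm
  have hnR : (3 : ℝ) ≤ n := by exact_mod_cast hn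
  have hm0 : (0 : ℝ) < m := by linarith
  have hsq1 : 1 ≤ Real.sqrt m := Real.one_le_sqrt.2 (by linarith)
  have hlog3 : ∀ t : ℝ, 3 ≤ t → 1 ≤ Real.log t := fun t ht => by
    rw [Real.le_log_iff_exp_le (by linarith)]
    linarith [Real.exp_one_lt_d9]
  have hlm := hlog3 m hmR
  have hln := hlog3 n hnR
  have hK0 : 0 < K := by linarith
  have hμ2 : 1 ≤ μ ^ 2 := one_le_pow₀ hμ
  set k : ℝ := 1024 * K * μ ^ 2 * (Real.log m + Real.log n) / ε ^ 2 with hk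
  have hk1 : 1 ≤ k := by
    rw [hk, le_div_iff₀ (by positivity)]
    have : 1 ≤ K * μ ^ 2 := one_le_mul_of_one_le_of_one_le hK hμ2
    have h2 : ε ^ 2 ≤ 1 := by nlinarith
    nlinarith
  have hz : ∀ i x y, |x * a i + y * b i| ≤ max |x| |y| * s i := fun i x y =>
    abs_comb_le (a i) (b i) x y
  set q : Fin m → ℝ := fun i => 2 / m + s i with hq
  have hq0 : ∀ i, 2 / m ≤ q i := fun i => by simp only [hq]; linarith [hs0 i]
  set p : Fin m → ℝ := fun i => min 1 (k * q i) with hp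
  have hp1 : ∀ i, p i ≤ 1 := fun i => min_le_left _ _
  have hpm : ∀ i, 1 / (m : ℝ) ≤ p i := fun i => by
    refine le_min ((div_le_one hm0).2 (by linarith)) ?_
    calc 1 / (m : ℝ) ≤ 1 * (2 / m) := by rw [one_mul]; gcongr; norm_num
      _ ≤ k * q i := by gcongr; exact hq0 i
  have hp0 : ∀ i, 0 < p i := fun i => lt_of_lt_of_le (by positivity) (hpm i)
  have hsump : ∑ i, p i ≤ 4 * k * Real.sqrt m := by
    calc ∑ i, p i ≤ ∑ i, k * q i := Finset.sum_le_sum fun i _ => min_le_right _ _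
      _ = k * (2 + ∑ i, s i) := by
          rw [← Finset.mul_sum]; simp only [hq]; rw [Finset.sum_add_distrib]
          simp [mul_div_cancel₀ _ hm0.ne']
      _ ≤ k * (2 * Real.sqrt m + 2 * Real.sqrt m) := by gcongr; linarith
      _ = _ := by ring
  have hFpos : ∀ j x y, 0 < ∑ i, φ i j (x * a i + y * b i) := fun j x y => by
    have h1 := hF j x y
    have h2 : 0 ≤ max |x| |y| := le_max_of_le_left (abs_nonneg _)
    exact pos_of_mul_pos_right (a := K * μ ^ 2) (by linarith) (by positivity)
  -- Grid points of mesh `1 / m²` in the square of half-side `m³`; there are at most `m ^ 12`.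
  let I : Finset ℤ := Finset.Icc (-(m : ℤ) ^ 5) ((m : ℤ) ^ 5)
  let T : Finset (Fin n × ℤ × ℤ) := univ ×ˢ (I ×ˢ I)
  have hTcard : (T.card : ℝ) ≤ n * (m : ℝ) ^ 12 := by
    have hI : (I.card : ℝ) ≤ (m : ℝ) ^ 6 := by
      have h1 : I.card = 2 * m ^ 5 + 1 := by
        simp only [I, Int.card_Icc]
        have : ((m : ℤ) ^ 5 + 1 - -(m : ℤ) ^ 5) = ((2 * m ^ 5 + 1 : ℕ) : ℤ) := by
          push_cast; ring
        rw [this, Int.toNat_natCast]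
      rw [h1]; push_cast
      have h5 : (1 : ℝ) ≤ (m : ℝ) ^ 5 := one_le_pow₀ (by linarith)
      nlinarith [pow_succ (m : ℝ) 5]
    have : (T.card : ℝ) = n * (I.card * I.card) := by
      simp only [T, Finset.card_product]; simp
    rw [this, show (m : ℝ) ^ 12 = m ^ 6 * m ^ 6 by ring]
    gcongr
  let f : Fin n × ℤ × ℤ → Fin m → ℝ := fun e i =>
    φ i e.1 ((e.2.1 / (m : ℝ) ^ 2) * a i + (e.2.2 / (m : ℝ) ^ 2) * b i)
  have hT8 : 8 * (T.card : ℝ) ≤ Real.exp ((ε / 4) ^ 2 * (k / (K * μ ^ 2)) / 4) := by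
    have e1 : (ε / 4) ^ 2 * (k / (K * μ ^ 2)) / 4 = 16 * (Real.log m + Real.log n) := by
      rw [hk]; field_simp; norm_num
    rw [e1]
    calc 8 * (T.card : ℝ) ≤ 8 * (n * (m : ℝ) ^ 12) := by gcongr
      _ ≤ (m : ℝ) ^ 4 * (n * (m : ℝ) ^ 12) := by
          gcongr
          calc (8 : ℝ) ≤ 3 ^ 4 := by norm_num
            _ ≤ _ := by gcongr
      _ = (m : ℝ) ^ 16 * n := by ring
      _ ≤ (m : ℝ) ^ 16 * (n : ℝ) ^ 16 := by
          gcongr; exact le_self_pow₀ (by linarith) (by norm_num)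
      _ = Real.exp (16 * (Real.log m + Real.log n)) := by
          rw [mul_add, Real.exp_add]
          have : ∀ t : ℝ, 0 < t → Real.exp (16 * Real.log t) = t ^ 16 := fun t ht => by
            rw [show (16 : ℝ) = ((16 : ℕ) : ℝ) by norm_num, Real.exp_nat_mul, Real.exp_log ht]
          rw [this m hm0, this n (by linarith)]
  obtain ⟨S, hScard, hS⟩ := exists_bernoulli_sample p hp0 hp1 T f (ε / 4) (k / (K * μ ^ 2))
    (by positivity) (by linarith) (by positivity) (fun e _ i => hφ0 _ _ _)
    (fun e _ => hFpos _ _ _) (fun e _ i hpi => by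
      have hpk : p i = k * q i := by
        simp only [hp] at hpi ⊢
        exact min_eq_right (le_of_lt ((min_lt_iff.1 hpi).resolve_left (lt_irrefl _)))
      rw [hpk]
      set x := (e.2.1 / (m : ℝ) ^ 2)
      set y := (e.2.2 / (m : ℝ) ^ 2)
      have h1 := hF e.1 x y
      have h2 : f e i ≤ q i * (m + max |x| |y|) := by
        have h3 := hφ1 i e.1 (x * a i + y * b i)
        have h4 := hz i x y
        have h5 : 0 ≤ max |x| |y| := le_max_of_le_left (abs_nonneg _)
        have h6 : q i * (m + max |x| |y|) =
            2 + 2 / m * max |x| |y| + s i * m + max |x| |y| * s i := by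
          simp only [hq]; field_simp; ring
        have h7 : 0 ≤ 2 / m * max |x| |y| + s i * m := by have := hs0 i; positivity
        change φ i e.1 (x * a i + y * b i) ≤ _
        linarith
      have hqi : 0 ≤ q i := le_trans (by positivity) (hq0 i)
      calc f e i * (k / (K * μ ^ 2))
          ≤ (q i * (K * μ ^ 2 * ∑ i, f e i)) * (k / (K * μ ^ 2)) := by
            gcongr
            exact h2.trans (mul_le_mul_of_nonneg_left h1 hqi)
        _ = k * q i * ∑ i, f e i := by field_simp) hT8
  set w : Fin m → ℝ := fun i => if i ∈ S then 1 / p i else 0 with hw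
  have hw0 : ∀ i, 0 ≤ w i := fun i => by
    have := hp0 i
    simp only [hw]; split_ifs <;> positivity
  have hwm : ∀ i, w i ≤ m := fun i => by
    simp only [hw]; split_ifs
    · rw [div_le_iff₀ (hp0 i)]
      have := hpm i
      rw [div_le_iff₀ hm0] at this; linarith
    · exact hm0.le
  have hw1 : ∀ i, |w i - 1| ≤ m := fun i => by
    rw [abs_le]; constructor <;> linarith [hw0 i, hwm i]
  have hdev : ∀ j x y, ∑ i, w i * φ i j (x * a i + y * b i) - ∑ i, φ i j (x * a i + y * b i) =
      ∑ i, (w i - 1) * φ i j (x * a i + y * b i) := fun j x y => by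
    rw [← Finset.sum_sub_distrib]; exact Finset.sum_congr rfl fun i _ => by ring
  have hgrid : ∀ j, ∀ r ∈ I, ∀ r' ∈ I, |∑ i, (w i - 1) *
      φ i j (r / (m : ℝ) ^ 2 * a i + r' / (m : ℝ) ^ 2 * b i)| ≤
        ε / 4 * ∑ i, φ i j (r / (m : ℝ) ^ 2 * a i + r' / (m : ℝ) ^ 2 * b i) := by
    intro j r hr r' hr'
    rw [← hdev]
    exact hS (j, r, r') (by simp [T, hr, hr'])
  refine ⟨w, hw0, ?_, fun j x y => ?_⟩
  · have h1 : (Finset.univ.filter fun i => w i ≠ 0) ⊆ S := by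
      intro i hi
      by_contra hc
      simp [hw, hc] at hi
    have h2 : ((Finset.univ.filter fun i => w i ≠ 0).card : ℝ) ≤ S.card := by
      exact_mod_cast Finset.card_le_card h1
    have h3 : 1 ≤ k * Real.sqrt m := one_le_mul_of_one_le_of_one_le hk1 hsq1
    linarith
  · rw [hdev]
    have hball := deviation_le_of_grid hm a b hab (fun i => φ i j) μ ε K hμ hε hε1 hK
      (fun i => hφL i j) (hF j) hreg1 w hw1 (hgrid j)
    exact deviation_le_of_ball hm a b (fun i => φ i j) μ ε B K hμ hε hε1 hK
      (fun i => hφB i j) (hF j) hreg2 w hw1 hball x y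

/-! ### The losses `g` and `h` -/

lemma log_one_add_exp_lipschitz {z z' : ℝ} (h : z ≤ z') :
    Real.log (1 + Real.exp z') - Real.log (1 + Real.exp z) ≤ z' - z := by
  have h1 : Real.log (1 + Real.exp z') ≤ Real.log (Real.exp (z' - z) * (1 + Real.exp z)) := by
    apply Real.log_le_log (by positivity)
    rw [mul_add, ← Real.exp_add, mul_one, sub_add_cancel]
    have : 1 ≤ Real.exp (z' - z) := Real.one_le_exp (by linarith)
    linarith
  rw [Real.log_mul (Real.exp_pos _).ne' (by positivity), Real.log_exp] at h1
  linarith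

lemma hfun_eq {c : ℝ} (hc : 0 < c) (z : ℝ) :
    hfun c z = Real.log (1 + Real.exp (-z)) - Real.log (1 + c * Real.exp (-z)) := by
  have h : c + (1 - c) / (1 + Real.exp (-z)) =
      (1 + c * Real.exp (-z)) / (1 + Real.exp (-z)) := by
    field_simp; ring
  rw [hfun, h, Real.log_div (by positivity) (by positivity)]; ring

/-- The Lipschitz bound comes from the first logarithm in `hfun_eq` alone, since the second one only
reduces the difference; monotonicity is that of `u ↦ (1 + u) / (1 + c u)`. -/
lemma hfun_antitone_lipschitz {c z z' : ℝ} (hc : 0 < c) (hc1 : c < 1 / 2) (h : z ≤ z') :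
    0 ≤ hfun c z - hfun c z' ∧ hfun c z - hfun c z' ≤ z' - z := by
  have hu : Real.exp (-z') ≤ Real.exp (-z) := Real.exp_le_exp.2 (by linarith)
  rw [hfun_eq hc, hfun_eq hc]
  constructor
  · have : Real.log ((1 + Real.exp (-z')) * (1 + c * Real.exp (-z))) ≤
        Real.log ((1 + Real.exp (-z)) * (1 + c * Real.exp (-z'))) := by
      apply Real.log_le_log (by positivity)
      nlinarith
    rw [Real.log_mul (by positivity) (by positivity),
      Real.log_mul (by positivity) (by positivity)] at this
    linarith
  · have h1 := log_one_add_exp_lipschitz (show -z' ≤ -z by linarith)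
    have h2 : Real.log (1 + c * Real.exp (-z')) ≤ Real.log (1 + c * Real.exp (-z)) :=
      Real.log_le_log (by positivity) (by gcongr)
    linarith

lemma hfun_nonneg {c : ℝ} (hc : 0 < c) (hc1 : c < 1 / 2) (z : ℝ) : 0 ≤ hfun c z := by
  rw [hfun_eq hc, sub_nonneg]
  apply Real.log_le_log (by positivity)
  have := Real.exp_pos (-z)
  nlinarith

lemma hfun_le {c : ℝ} (hc : 0 < c) (hc1 : c < 1 / 2) (z : ℝ) : hfun c z ≤ Real.log (1 / c) := by
  rw [one_div, Real.log_inv, hfun, neg_le_neg_iff]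
  apply Real.log_le_log hc
  have : 0 ≤ (1 - c) / (1 + Real.exp (-z)) := div_nonneg (by linarith) (by positivity)
  linarith

lemma hfun_ge {c z : ℝ} (hc : 0 < c) (hc1 : c < 1 / 2) (hz : z ≤ 0) : 1 / 4 ≤ hfun c z := by
  have h1 : c + (1 - c) / (1 + Real.exp (-z)) ≤ 3 / 4 := by
    have h2 : 1 ≤ Real.exp (-z) := Real.one_le_exp (by linarith)
    have : (1 - c) / (1 + Real.exp (-z)) ≤ (1 - c) / 2 :=
      div_le_div_of_nonneg_left (by linarith) (by norm_num) (by linarith)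
    linarith
  have h0 : 0 < c + (1 - c) / (1 + Real.exp (-z)) := by
    have : 0 ≤ (1 - c) / (1 + Real.exp (-z)) := div_nonneg (by linarith) (by positivity)
    linarith
  have h3 := Real.log_le_sub_one_of_pos h0
  rw [hfun]; linarith

lemma hfun_le_abs {c : ℝ} (hc : 0 < c) (hc1 : c < 1 / 2) (z : ℝ) : hfun c z ≤ 2 + |z| := by
  have h0 : hfun c 0 ≤ 1 := by
    rw [hfun_eq hc]
    have h1 : 0 ≤ Real.log (1 + c * Real.exp (-0)) := Real.log_nonneg (by simp; linarith)
    have h2 : Real.log (1 + Real.exp (-0)) ≤ 1 := by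
      have := Real.log_two_lt_d9
      norm_num; linarith
    linarith
  rcases le_total z 0 with h | h
  · have := (hfun_antitone_lipschitz hc hc1 h).2
    have := neg_le_abs z
    linarith
  · have := (hfun_antitone_lipschitz hc hc1 h).1
    have := abs_nonneg z
    linarith

lemma hfun_lipschitz {c : ℝ} (hc : 0 < c) (hc1 : c < 1 / 2) (z z' : ℝ) :
    |hfun c z - hfun c z'| ≤ |z - z'| := by
  rcases le_total z z' with h | h
  · have := hfun_antitone_lipschitz hc hc1 h
    rw [abs_of_nonneg this.1, abs_of_nonpos (by linarith)]; linarith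
  · have := hfun_antitone_lipschitz hc hc1 h
    rw [abs_of_nonpos (by linarith), abs_of_nonneg (by linarith)]; linarith

lemma gfun_lipschitz {c : ℝ} (z z' : ℝ) : |gfun c z - gfun c z'| ≤ |z - z'| := by
  have key : ∀ {z z' : ℝ}, z ≤ z' → |gfun c z - gfun c z'| ≤ |z - z'| := by
    intro z z' h
    have h1 := log_one_add_exp_lipschitz h
    have h2 : Real.log (1 + Real.exp z) ≤ Real.log (1 + Real.exp z') :=
      Real.log_le_log (by positivity) (by gcongr)
    rw [gfun, gfun, abs_of_nonpos (by linarith), abs_of_nonpos (by linarith)]; linarith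
  rcases le_total z z' with h | h
  · exact key h
  · rw [abs_sub_comm, abs_sub_comm z]; exact key h

lemma gfun_bounds {c : ℝ} (hc : 0 < c) (hc1 : c < 1 / 2) (z : ℝ) :
    max z 0 ≤ gfun c z ∧ gfun c z ≤ max z 0 + 2 := by
  have h1 : Real.log (1 - c) ≤ 0 := Real.log_nonpos (by linarith) (by linarith)
  have h2 : -1 ≤ Real.log (1 - c) := by
    have := Real.log_le_log (by norm_num) (show (1 / 2 : ℝ) ≤ 1 - c by linarith)
    rw [one_div, Real.log_inv] at this
    linarith [Real.log_two_lt_d9]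
  have h3 : z ≤ Real.log (1 + Real.exp z) := by
    rw [Real.le_log_iff_exp_le (by positivity)]; linarith
  have h4 : 0 ≤ Real.log (1 + Real.exp z) := Real.log_nonneg (by linarith [Real.exp_pos z])
  have h5 : Real.log (1 + Real.exp z) ≤ max z 0 + 1 := by
    have e1 := log_one_add_exp_lipschitz (le_max_left z 0)
    have e2 : Real.log (1 + Real.exp z) ≤ Real.log (1 + Real.exp (max z 0)) :=
      Real.log_le_log (by positivity) (by gcongr; exact le_max_left _ _)
    have e3 := log_one_add_exp_lipschitz (le_max_right z 0)
    have e4 : Real.log (1 + Real.exp 0) ≤ 1 := by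
      have := Real.log_two_lt_d9
      norm_num; linarith
    linarith
  rw [gfun]
  constructor
  · exact max_le (by linarith) (by linarith)
  · linarith

lemma gfun_ge {c z : ℝ} (hc : 0 < c) (hc1 : c < 1 / 2) (hz : 0 ≤ z) : 1 / 4 ≤ gfun c z := by
  have h1 : Real.log (1 - c) ≤ 0 := Real.log_nonpos (by linarith) (by linarith)
  have h2 : Real.log 2 ≤ Real.log (1 + Real.exp z) :=
    Real.log_le_log (by norm_num) (by linarith [Real.one_le_exp hz])
  rw [gfun]; linarith [Real.log_two_gt_d9]

lemma gfun_scale {c : ℝ} (hc : 0 < c) (hc1 : c < 1 / 2) (z t : ℝ) (ht : 1 ≤ t) :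
    |gfun c (t * z) - t * gfun c z| ≤ t * 2 := by
  have h1 := gfun_bounds hc hc1 z
  have h2 := gfun_bounds hc hc1 (t * z)
  have h3 : max (t * z) 0 = t * max z 0 := by
    rw [mul_max_of_nonneg _ _ (by linarith), mul_zero]
  rw [h3] at h2
  rw [abs_le]; constructor <;> nlinarith

/-! ### Orthonormal coordinates -/

/-- Gram–Schmidt on the two columns of `α`: the vectors `(α_i · η)_i` are exactly the combinations
`x a + y b` of two orthonormal vectors `a, b`. -/
lemma exists_orthonormal_coords {m : ℕ} (α : Fin m → Fin 2 → ℝ)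
    (hα : ∀ η : Fin 2 → ℝ, η ≠ 0 → ∃ i, α i ⬝ᵥ η ≠ 0) :
    ∃ (a b : Fin m → ℝ), (∑ i, a i ^ 2 = 1) ∧ (∑ i, b i ^ 2 = 1) ∧ (∑ i, a i * b i = 0) ∧
      (∀ η : Fin 2 → ℝ, ∃ x y, ∀ i, α i ⬝ᵥ η = x * a i + y * b i) ∧
      (∀ x y : ℝ, ∃ η : Fin 2 → ℝ, ∀ i, α i ⬝ᵥ η = x * a i + y * b i) := by
  simp only [dotProduct, Fin.sum_univ_two] at *
  set P := ∑ i, α i 0 ^ 2 with hP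
  set Q := ∑ i, α i 0 * α i 1 with hQ
  have hP0 : 0 < P := by
    obtain ⟨i, hi⟩ := hα ![1, 0] (by intro h; simpa using congrFun h 0)
    simp at hi
    exact Finset.sum_pos' (fun i _ => sq_nonneg _) ⟨i, mem_univ _, by positivity⟩
  set β : Fin m → ℝ := fun i => α i 1 - Q / P * α i 0 with hβ
  set T := ∑ i, β i ^ 2 with hT
  have hT0 : 0 < T := by
    obtain ⟨i, hi⟩ := hα ![-(Q / P), 1] (by intro h; simpa using congrFun h 1)
    simp at hi
    have : β i ≠ 0 := fun h => hi (by simp only [hβ] at h; linarith)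
    exact Finset.sum_pos' (fun i _ => sq_nonneg _) ⟨i, mem_univ _, by positivity⟩
  have hsP : 0 < Real.sqrt P := Real.sqrt_pos.2 hP0
  have hsT : 0 < Real.sqrt T := Real.sqrt_pos.2 hT0
  refine ⟨fun i => α i 0 / Real.sqrt P, fun i => β i / Real.sqrt T, ?_, ?_, ?_, ?_, ?_⟩
  · simp_rw [div_pow, Real.sq_sqrt hP0.le]
    rw [← Finset.sum_div, ← hP, div_self hP0.ne']
  · simp_rw [div_pow, Real.sq_sqrt hT0.le]
    rw [← Finset.sum_div, ← hT, div_self hT0.ne']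
  · have h1 : ∀ i, α i 0 / Real.sqrt P * (β i / Real.sqrt T) =
        (α i 0 * α i 1 - Q / P * α i 0 ^ 2) / (Real.sqrt P * Real.sqrt T) := fun i => by
      simp only [hβ]; field_simp
    simp_rw [h1]
    rw [← Finset.sum_div, Finset.sum_sub_distrib, ← Finset.mul_sum, ← hP, ← hQ,
      div_mul_cancel₀ _ hP0.ne', sub_self, zero_div]
  · intro η
    refine ⟨(η 0 + Q / P * η 1) * Real.sqrt P, η 1 * Real.sqrt T, fun i => ?_⟩
    simp only [hβ]
    field_simp
    ring
  · intro x y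
    refine ⟨![x / Real.sqrt P - Q / P * (y / Real.sqrt T), y / Real.sqrt T], fun i => ?_⟩
    simp only [hβ, Matrix.cons_val_zero, Matrix.cons_val_one]
    field_simp
    ring

lemma sum_abs_le_sqrt {m : ℕ} (a : Fin m → ℝ) (ha : ∑ i, a i ^ 2 = 1) :
    ∑ i, |a i| ≤ Real.sqrt m := by
  refine Real.le_sqrt_of_sq_le ?_
  have := sq_sum_le_card_mul_sum_sq (s := (univ : Finset (Fin m))) (f := fun i => |a i|)
  simpa [ha] using this

/-- The `ℓ₁` norm of `x a + y b` dominates its `ℓ₂` norm, which is `√(x² + y²)`. -/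
lemma max_abs_le_l1 {m : ℕ} (a b : Fin m → ℝ) (ha : ∑ i, a i ^ 2 = 1) (hb : ∑ i, b i ^ 2 = 1)
    (hab : ∑ i, a i * b i = 0) (x y : ℝ) : max |x| |y| ≤ ∑ i, |x * a i + y * b i| := by
  have h1 : ∑ i, |x * a i + y * b i| ^ 2 = x ^ 2 + y ^ 2 := by
    calc ∑ i, |x * a i + y * b i| ^ 2
        = ∑ i, (x ^ 2 * a i ^ 2 + y ^ 2 * b i ^ 2 + 2 * x * y * (a i * b i)) :=
          Finset.sum_congr rfl fun i _ => by rw [sq_abs]; ring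
      _ = _ := by
          rw [Finset.sum_add_distrib, Finset.sum_add_distrib, ← Finset.mul_sum, ← Finset.mul_sum,
            ← Finset.mul_sum, ha, hb, hab]; ring
  have h2 : ∑ i, |x * a i + y * b i| ^ 2 ≤ (∑ i, |x * a i + y * b i|) ^ 2 :=
    Finset.sum_sq_le_sq_sum_of_nonneg fun i _ => abs_nonneg _
  have h3 : 0 ≤ ∑ i, |x * a i + y * b i| := Finset.sum_nonneg fun i _ => abs_nonneg _
  exact max_le (abs_le_of_sq_le_sq (by nlinarith) h3)
    (abs_le_of_sq_le_sq (by nlinarith) h3)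

/-! ### Lower bound on the objective -/

/-- At least a `1 / (2μ)` fraction of the rows of a `μ`-complex matrix lies on the negative side of
any nonzero `η`; for the positive side, apply this to `-η`. -/
lemma card_le_of_mu0 {m : ℕ} {x : Fin m → Fin 2 → ℝ} {s : Finset (Fin m)} {μ : ℝ} (hμ : 1 ≤ μ)
    (h : Mu0ComplexOn x s μ) {η : Fin 2 → ℝ} (hη : η ≠ 0) :
    (s.card : ℝ) ≤ 2 * μ * ((s.filter fun i => x i ⬝ᵥ η < 0).card : ℝ) := by
  have h1 := h η hη
  have h2 := Finset.card_filter_add_card_filter_not (s := s) (fun i => x i ⬝ᵥ η < 0)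
  simp only [not_lt] at h2
  have h3 : (s.card : ℝ) = ((s.filter fun i => x i ⬝ᵥ η < 0).card : ℝ) +
      ((s.filter fun i => 0 ≤ x i ⬝ᵥ η).card : ℝ) := by exact_mod_cast h2.symm
  have h4 : (0 : ℝ) ≤ ((s.filter fun i => x i ⬝ᵥ η < 0).card : ℝ) := by positivity
  nlinarith

/-- In a `μ`-complex matrix the positive part of `Xη` carries at least a `1 / (2μ)` fraction of
its `ℓ₁` norm; this is the hypothesis at `-η`. -/
lemma l1_le_of_mu1 {m : ℕ} {x : Fin m → Fin 2 → ℝ} {s : Finset (Fin m)} {μ : ℝ} (hμ : 1 ≤ μ)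
    (h : Mu1ComplexOn x s μ) (η : Fin 2 → ℝ) :
    ∑ i ∈ s, |x i ⬝ᵥ η| ≤ 2 * μ * ∑ i ∈ s, max (x i ⬝ᵥ η) 0 := by
  have h1 := h (-η)
  simp only [dotProduct_neg, abs_neg] at h1
  rw [Finset.sum_filter, Finset.sum_filter] at h1
  have h2 : ∑ i ∈ s, |x i ⬝ᵥ η| = ∑ i ∈ s, (if 0 ≤ -(x i ⬝ᵥ η) then -(x i ⬝ᵥ η) else 0) +
      ∑ i ∈ s, (if -(x i ⬝ᵥ η) < 0 then |x i ⬝ᵥ η| else 0) := by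
    rw [← Finset.sum_add_distrib]
    refine Finset.sum_congr rfl fun i _ => ?_
    rcases lt_or_ge (-(x i ⬝ᵥ η)) 0 with h | h
    · rw [if_neg (not_le.2 h), if_pos h, zero_add]
    · rw [if_pos h, if_neg (not_lt.2 h), add_zero, abs_of_nonpos (by linarith)]
  have h3 : ∑ i ∈ s, (if -(x i ⬝ᵥ η) < 0 then |x i ⬝ᵥ η| else 0) =
      ∑ i ∈ s, max (x i ⬝ᵥ η) 0 := by
    refine Finset.sum_congr rfl fun i _ => ?_
    split_ifs with h
    · have : 0 < x i ⬝ᵥ η := by linarith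
      rw [abs_of_pos this, max_eq_left this.le]
    · rw [max_eq_right (by linarith)]
  have h4 : 0 ≤ ∑ i ∈ s, max (x i ⬝ᵥ η) 0 := Finset.sum_nonneg fun i _ => le_max_right _ _
  rw [h3] at h2 h1
  nlinarith

/-- The lower bound `F ≥ (m + ‖Xη‖₁) / (14 μ²)`, with `s` the rows carrying `g` and `t` the rows
carrying `h`. Each part of `F` is at least a quarter of the number of rows on the side of `0` where
its loss is large, which `ℓ₀`-complexity makes a constant fraction (up to `μ`) of all its rows; and
`g(z) ≥ max z 0` together with `ℓ₁`-complexity controls `∑_s |x_i · η|`, hence by `hts` also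
`∑_t |x_i · η|`. At `η = 0`, where `ℓ₀`-complexity says nothing, every loss is at least `1/4`. -/
lemma objective_lower_bound {m : ℕ} (x : Fin m → Fin 2 → ℝ) (c : Fin m → ℝ)
    (hc0 : ∀ i, 0 < c i) (hc1 : ∀ i, c i < 1 / 2) (s t : Finset (Fin m)) {μ : ℝ} (hμ : 1 ≤ μ)
    (hs1 : Mu1ComplexOn x s μ) (hs0 : Mu0ComplexOn x s μ) (ht0 : Mu0ComplexOn x t μ)
    (η : Fin 2 → ℝ) (hts : ∑ i ∈ t, |x i ⬝ᵥ η| ≤ 2 * μ * ∑ i ∈ s, |x i ⬝ᵥ η|) :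
    (s.card : ℝ) + t.card + (∑ i ∈ s, |x i ⬝ᵥ η| + ∑ i ∈ t, |x i ⬝ᵥ η|) ≤
      14 * μ ^ 2 * (∑ i ∈ s, gfun (c i) (x i ⬝ᵥ η) + ∑ i ∈ t, hfun (c i) (x i ⬝ᵥ η)) := by
  have hg0 : ∀ i z, 0 ≤ gfun (c i) z := fun i z =>
    (le_max_right _ _).trans (gfun_bounds (hc0 i) (hc1 i) z).1
  have hh0 : ∀ i z, 0 ≤ hfun (c i) z := fun i z => hfun_nonneg (hc0 i) (hc1 i) z
  have hcount : ∀ (r u : Finset (Fin m)) (f : Fin m → ℝ), u ⊆ r → (∀ i ∈ r, 0 ≤ f i) →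
      (∀ i ∈ u, 1 / 4 ≤ f i) → (u.card : ℝ) ≤ 4 * ∑ i ∈ r, f i := by
    intro r u f hur hf hu
    have h1 := Finset.card_nsmul_le_sum u f (1 / 4) hu
    have h2 := Finset.sum_le_sum_of_subset_of_nonneg hur fun i hi _ => hf i hi
    rw [nsmul_eq_mul] at h1
    linarith
  set G := ∑ i ∈ s, gfun (c i) (x i ⬝ᵥ η) with hG
  set H := ∑ i ∈ t, hfun (c i) (x i ⬝ᵥ η) with hH
  have hG0 : 0 ≤ G := Finset.sum_nonneg fun i _ => hg0 _ _
  have hH0 : 0 ≤ H := Finset.sum_nonneg fun i _ => hh0 _ _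
  have hsG : (s.card : ℝ) ≤ 8 * μ * G := by
    by_cases hη : η = 0
    · have := hcount s s (fun i => gfun (c i) (x i ⬝ᵥ η)) subset_rfl (fun i _ => hg0 _ _)
        (fun i _ => gfun_ge (hc0 i) (hc1 i) (by rw [hη, dotProduct_zero]))
      nlinarith
    · have h1 := card_le_of_mu0 hμ hs0 (neg_ne_zero.2 hη)
      have h2 := hcount s (s.filter fun i => x i ⬝ᵥ (-η) < 0)
        (fun i => gfun (c i) (x i ⬝ᵥ η)) (Finset.filter_subset _ _)
        (fun i _ => hg0 _ _) (fun i hi => gfun_ge (hc0 i) (hc1 i) (by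
          have := (Finset.mem_filter.1 hi).2
          rw [dotProduct_neg] at this
          linarith))
      nlinarith
  have htH : (t.card : ℝ) ≤ 8 * μ * H := by
    by_cases hη : η = 0
    · have := hcount t t (fun i => hfun (c i) (x i ⬝ᵥ η)) subset_rfl (fun i _ => hh0 _ _)
        (fun i _ => hfun_ge (hc0 i) (hc1 i) (by rw [hη, dotProduct_zero]))
      nlinarith
    · have h1 := card_le_of_mu0 hμ ht0 hη
      have h2 := hcount t (t.filter fun i => x i ⬝ᵥ η < 0)
        (fun i => hfun (c i) (x i ⬝ᵥ η)) (Finset.filter_subset _ _)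
        (fun i _ => hh0 _ _) (fun i hi => hfun_ge (hc0 i) (hc1 i)
          (Finset.mem_filter.1 hi).2.le)
      nlinarith
  have hl1 : ∑ i ∈ s, |x i ⬝ᵥ η| ≤ 2 * μ * G := by
    refine (l1_le_of_mu1 hμ hs1 η).trans ?_
    exact mul_le_mul_of_nonneg_left
      (Finset.sum_le_sum fun i _ => (gfun_bounds (hc0 i) (hc1 i) _).1) (by positivity)
  have hl2 : ∑ i ∈ t, |x i ⬝ᵥ η| ≤ 4 * μ ^ 2 * G := by
    refine hts.trans ((mul_le_mul_of_nonneg_left hl1 (by positivity)).trans_eq ?_)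
    ring
  have hμμ : μ ≤ μ ^ 2 := by nlinarith
  have h1 : μ * G ≤ μ ^ 2 * G := by gcongr
  have h2 : μ * H ≤ μ ^ 2 * H := by gcongr
  have h3 : 0 ≤ μ ^ 2 * H := by positivity
  linarith

/-- Coresets for the 3PL IRT model (ability-parameter subproblems): one nonnegative
weight vector of small support is a `(1+ε)`-coreset simultaneously for all `n`
objectives `F_j`. -/
theorem stmt1 :
    ∃ C : ℝ, 0 < C ∧
      ∀ (m n : ℕ), 3 ≤ m → 3 ≤ n →
      ∀ (α : Fin m → Fin 2 → ℝ) (c : Fin m → ℝ) (cmin : ℝ),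
        0 < cmin → cmin < 1 / 2 → (∀ i, cmin ≤ c i ∧ c i < 1 / 2) →
      ∀ E : ℝ, IsGreatest (Set.range fun i : Fin m => Real.log (1 / c i)) E →
      ∀ Y : Fin m → Fin n → ℝ, (∀ i j, Y i j = 1 ∨ Y i j = -1) →
      ∀ μ ε : ℝ, 1 ≤ μ → 0 < ε → ε < 1 / 2 →
        (∀ j : Fin n,
          Mu1ComplexOn (fun i k => -Y i j * α i k)
            (Finset.univ.filter fun i => Y i j = -1) μ ∧
          Mu0ComplexOn (fun i k => -Y i j * α i k)
            (Finset.univ.filter fun i => Y i j = -1) μ ∧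
          Mu1ComplexOn (fun i k => -Y i j * α i k)
            (Finset.univ.filter fun i => Y i j = 1) μ ∧
          Mu0ComplexOn (fun i k => -Y i j * α i k)
            (Finset.univ.filter fun i => Y i j = 1) μ) →
        (∀ (j : Fin n) (η : Fin 2 → ℝ),
          ∑ i ∈ Finset.univ.filter (fun i => Y i j = -1),
              |(fun k => -Y i j * α i k) ⬝ᵥ η| ≤
            2 * μ * ∑ i ∈ Finset.univ.filter (fun i => Y i j = 1),
              |(fun k => -Y i j * α i k) ⬝ᵥ η|) →
        (∀ (j : Fin n) (η : Fin 2 → ℝ),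
          ∑ i ∈ Finset.univ.filter (fun i => Y i j = 1),
              |(fun k => -Y i j * α i k) ⬝ᵥ η| ≤
            2 * μ * ∑ i ∈ Finset.univ.filter (fun i => Y i j = -1),
              |(fun k => -Y i j * α i k) ⬝ᵥ η|) →
        ∃ w : Fin m → ℝ, (∀ i, 0 ≤ w i) ∧
          ((Finset.univ.filter fun i => w i ≠ 0).card : ℝ) ≤
            C * (1 + E) * (μ ^ 2 * Real.sqrt m / ε ^ 2) *
              ((Real.log m) ^ 2 + Real.log n) ∧
          ∀ (j : Fin n) (η : Fin 2 → ℝ),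
            |(∑ i ∈ Finset.univ.filter (fun i => Y i j = -1),
                  w i * gfun (c i) ((fun k => -Y i j * α i k) ⬝ᵥ η)) +
                (∑ i ∈ Finset.univ.filter (fun i => Y i j = 1),
                  w i * hfun (c i) ((fun k => -Y i j * α i k) ⬝ᵥ η)) -
                ((∑ i ∈ Finset.univ.filter (fun i => Y i j = -1),
                    gfun (c i) ((fun k => -Y i j * α i k) ⬝ᵥ η)) +
                  ∑ i ∈ Finset.univ.filter (fun i => Y i j = 1),
                    hfun (c i) ((fun k => -Y i j * α i k) ⬝ᵥ η))| ≤
              ε * ((∑ i ∈ Finset.univ.filter (fun i => Y i j = -1),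
                  gfun (c i) ((fun k => -Y i j * α i k) ⬝ᵥ η)) +
                ∑ i ∈ Finset.univ.filter (fun i => Y i j = 1),
                  hfun (c i) ((fun k => -Y i j * α i k) ⬝ᵥ η)) := by
  refine ⟨172032, by norm_num, ?_⟩
  intro m n hm hn α c cmin hcmin _ hc E hE Y hY μ ε hμ hε hε1 hcx _ hX2
  have hc0 : ∀ i, 0 < c i := fun i => hcmin.trans_le (hc i).1
  have hc1 : ∀ i, c i < 1 / 2 := fun i => (hc i).2
  have hmR : (3 : ℝ) ≤ m := by exact_mod_cast hm
  have hnR : (3 : ℝ) ≤ n := by exact_mod_cast hn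
  have hm0 : (0 : ℝ) < m := by linarith
  have hsq0 : 0 < Real.sqrt m := Real.sqrt_pos.2 hm0
  have hsq1 : 1 ≤ Real.sqrt m := Real.one_le_sqrt.2 (by linarith)
  have hsqm : Real.sqrt m * Real.sqrt m = m := Real.mul_self_sqrt hm0.le
  have hhE : ∀ i z, hfun (c i) z ≤ E := fun i z =>
    (hfun_le (hc0 i) (hc1 i) z).trans (hE.2 ⟨i, rfl⟩)
  have hE0 : 0 ≤ E := (hfun_nonneg (hc0 ⟨0, by omega⟩) (hc1 _) 0).trans (hhE ⟨0, by omega⟩ 0)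
  have hlog3 : ∀ t : ℝ, 3 ≤ t → 1 ≤ Real.log t := fun t ht => by
    rw [Real.le_log_iff_exp_le (by linarith)]
    linarith [Real.exp_one_lt_d9]
  have hlm := hlog3 m hmR
  have hln := hlog3 n hnR
  by_cases htriv : (m : ℝ) ≤ 172032 * (1 + E) * (μ ^ 2 * Real.sqrt m / ε ^ 2) *
      ((Real.log m) ^ 2 + Real.log n)
  · refine ⟨fun _ => 1, fun _ => zero_le_one, ?_, fun j η => ?_⟩
    · simpa using htriv
    · simp only [one_mul, sub_self, abs_zero]
      refine mul_nonneg hε.le (add_nonneg ?_ ?_) <;> refine Finset.sum_nonneg fun i _ => ?_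
      · exact (le_max_right _ _).trans (gfun_bounds (hc0 i) (hc1 i) _).1
      · exact hfun_nonneg (hc0 i) (hc1 i) _
  push Not at htriv
  -- in the remaining case `√m` dominates `(1 + E) μ² / ε²`
  have hreg : 172032 * (1 + E) * μ ^ 2 ≤ ε * m := by
    have h1 : 172032 * (1 + E) * (μ ^ 2 * Real.sqrt m / ε ^ 2) ≤ m := by
      refine le_trans (le_mul_of_one_le_right (by positivity) ?_) htriv.le
      nlinarith
    have h2 : 172032 * (1 + E) * μ ^ 2 * Real.sqrt m ≤ ε ^ 2 * Real.sqrt m * Real.sqrt m := by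
      rw [mul_assoc (ε ^ 2), hsqm]
      rw [← mul_div_assoc, div_le_iff₀ (by positivity)] at h1
      linarith
    have h3 := le_of_mul_le_mul_right h2 hsq0
    have h4 : ε ^ 2 ≤ ε := by nlinarith
    have h5 : Real.sqrt m ≤ m := by nlinarith
    exact h3.trans (mul_le_mul h4 h5 hsq0.le hε.le)
  have hdot : ∀ i j η, (fun k => -Y i j * α i k) ⬝ᵥ η = -Y i j * (α i ⬝ᵥ η) := fun i j η => by
    rw [show (fun k => -Y i j * α i k) = (-Y i j) • α i from rfl, smul_dotProduct, smul_eq_mul]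
  have hsplit : ∀ (f : Fin m → ℝ) j, ∑ i ∈ Finset.univ.filter (fun i => Y i j = -1), f i +
      ∑ i ∈ Finset.univ.filter (fun i => Y i j = 1), f i = ∑ i, f i := fun f j => by
    rw [Finset.sum_filter, Finset.sum_filter, ← Finset.sum_add_distrib]
    refine Finset.sum_congr rfl fun i _ => ?_
    rcases hY i j with h | h <;> rw [h] <;> norm_num
  -- the summand of `F_j` for item `i`, as a function of `α_i · η`
  set φ : Fin m → Fin n → ℝ → ℝ := fun i j z =>
    if Y i j = -1 then gfun (c i) z else hfun (c i) (-z) with hφ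
  have hsum : ∀ (w : Fin m → ℝ) j η,
      (∑ i ∈ Finset.univ.filter (fun i => Y i j = -1),
          w i * gfun (c i) ((fun k => -Y i j * α i k) ⬝ᵥ η)) +
        (∑ i ∈ Finset.univ.filter (fun i => Y i j = 1),
          w i * hfun (c i) ((fun k => -Y i j * α i k) ⬝ᵥ η)) =
      ∑ i, w i * φ i j (α i ⬝ᵥ η) := fun w j η => by
    rw [← hsplit _ j]
    congr 1 <;> refine Finset.sum_congr rfl fun i hi => ?_ <;>
      have hi' := (Finset.mem_filter.1 hi).2
    · rw [hdot]; simp only [hφ]; rw [if_pos hi', hi']; norm_num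
    · rw [hdot]; simp only [hφ]; rw [hi', if_neg (by norm_num)]; norm_num
  have hsum1 : ∀ j η,
      (∑ i ∈ Finset.univ.filter (fun i => Y i j = -1),
          gfun (c i) ((fun k => -Y i j * α i k) ⬝ᵥ η)) +
        (∑ i ∈ Finset.univ.filter (fun i => Y i j = 1),
          hfun (c i) ((fun k => -Y i j * α i k) ⬝ᵥ η)) =
      ∑ i, φ i j (α i ⬝ᵥ η) := fun j η => by
    simpa using hsum (fun _ => 1) j η
  have habs : ∀ i j η, |(fun k => -Y i j * α i k) ⬝ᵥ η| = |α i ⬝ᵥ η| := fun i j η => by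
    rw [hdot, abs_mul, abs_neg]
    rcases hY i j with h | h <;> rw [h] <;> norm_num
  have hlow : ∀ j η, m + ∑ i, |α i ⬝ᵥ η| ≤ 14 * μ ^ 2 * ∑ i, φ i j (α i ⬝ᵥ η) := by
    intro j η
    have h := objective_lower_bound (fun i k => -Y i j * α i k) c hc0 hc1 _ _ hμ
      (hcx j).1 (hcx j).2.1 (hcx j).2.2.2 η (hX2 j η)
    rw [hsplit, hsum1] at h
    have hcard := hsplit (fun _ => 1) j
    simp only [Finset.sum_const, nsmul_eq_mul, mul_one, Finset.card_univ, Fintype.card_fin]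
      at hcard
    rw [hcard] at h
    simpa only [habs] using h
  -- `ℓ₀`-complexity rules out a nonzero `η` orthogonal to every `α_i`
  have hrank : ∀ η : Fin 2 → ℝ, η ≠ 0 → ∃ i, α i ⬝ᵥ η ≠ 0 := by
    intro η hη
    by_contra hall
    push Not at hall
    let j : Fin n := ⟨0, by omega⟩
    have h1 := card_le_of_mu0 hμ (hcx j).2.1 hη
    have h2 := card_le_of_mu0 hμ (hcx j).2.2.2 hη
    simp only [hdot, hall, mul_zero, lt_irrefl, Finset.filter_false, Finset.card_empty,
      Nat.cast_zero] at h1 h2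
    have hcard := hsplit (fun _ => 1) j
    simp only [Finset.sum_const, nsmul_eq_mul, mul_one, Finset.card_univ, Fintype.card_fin]
      at hcard
    linarith
  obtain ⟨a, b, ha, hb, hab, hto, hfrom⟩ := exists_orthonormal_coords α hrank
  obtain ⟨w, hw0, hwcard, hw⟩ := exists_coreset_of_lipschitz hm hn a b
    (by rw [Finset.sum_add_distrib]; linarith [sum_abs_le_sqrt a ha, sum_abs_le_sqrt b hb])
    φ μ ε (2 + E) 14 hμ hε hε1 (by norm_num)
    (fun i j z => by
      simp only [hφ]; split_ifs
      · exact (le_max_right _ _).trans (gfun_bounds (hc0 i) (hc1 i) z).1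
      · exact hfun_nonneg (hc0 i) (hc1 i) _)
    (fun i j z => by
      simp only [hφ]; split_ifs
      · have h1 := (gfun_bounds (hc0 i) (hc1 i) z).2
        have h2 : max z 0 ≤ |z| := max_le (le_abs_self z) (abs_nonneg z)
        linarith
      · simpa using hfun_le_abs (hc0 i) (hc1 i) (-z))
    (fun i j z z' => by
      simp only [hφ]; split_ifs
      · exact gfun_lipschitz z z'
      · refine (hfun_lipschitz (hc0 i) (hc1 i) _ _).trans_eq ?_
        rw [neg_sub_neg, abs_sub_comm])
    (fun i j z t ht => by
      have ht0 : 0 ≤ t := by linarith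
      simp only [hφ]; split_ifs
      · refine (gfun_scale (hc0 i) (hc1 i) z t ht).trans ?_
        gcongr; linarith
      · have h1 := hfun_nonneg (hc0 i) (hc1 i) (-z)
        have h2 := hfun_nonneg (hc0 i) (hc1 i) (-(t * z))
        have h3 := hhE i (-z)
        have h4 := hhE i (-(t * z))
        rw [abs_le]; constructor <;> nlinarith)
    (fun j x y => by
      obtain ⟨η, hη⟩ := hfrom x y
      have h1 := hlow j η
      simp only [hη] at h1
      linarith [max_abs_le_l1 a b ha hb hab x y])
    (by nlinarith [sq_nonneg μ]) (by nlinarith [sq_nonneg μ])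
  refine ⟨w, hw0, hwcard.trans ?_, fun j η => ?_⟩
  · calc 12 * (1024 * 14 * μ ^ 2 * (Real.log m + Real.log n) / ε ^ 2) * Real.sqrt m
        = 172032 * 1 * (μ ^ 2 * Real.sqrt m / ε ^ 2) * (Real.log m + Real.log n) := by ring
      _ ≤ _ := by
          gcongr
          · linarith
          · nlinarith
  · obtain ⟨x, y, hxy⟩ := hto η
    rw [hsum, hsum1]
    simp only [hxy]
    exact hw j x y
end

section
/- Let μ₁ ≥ 1. Let X' ∈ ℝ^{m'×2} be μ₁-complex in the ℓ₁ sense and X'' ∈ ℝ^{m''×2} satisfy ‖X''η‖₁ ≤ 2μ₁·‖X'η‖₁ for all η ∈ ℝ². Let X ∈ ℝ^{m×2} (m = m'+m'') be the vertical concatenation of X' and X'', let U ∈ ℝ^{m×2} have orthonormal columns (UᵀU = I₂) with X = U·R for some R ∈ ℝ^{2×2}, and let c_1,…,c_{m'} ∈ [0,1/2). Define f₁(Xβ) = ∑_{i=1}^{m'} g_{c_i}(x'_i·β), where x'_i are the rows of X'. If ℓ ∈ [m'] and β ∈ ℝ² satisfy x'_ℓ·β ≥ ln(1+√3), then g_{c_ℓ}(x'_ℓ·β)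 ≤ 12·μ₁²·‖U_ℓ‖₂·f₁(Xβ), where U_ℓ is the row of U corresponding to row ℓ of X'. -/
/-!
At a margin `z ≥ ln(1+√3)` one has `2 + 2e^z ≤ e^{2z}`, with equality at the threshold, so
`g_c(z) ≤ ln(1+e^z) + ln 2 ≤ 2z` (`gfun_le_two_mul`). Writing `z = U_ℓ · Rβ`, Cauchy–Schwarz and
the orthonormality of the columns of `U` give `z ≤ ‖U_ℓ‖₂ ‖Xβ‖₂ ≤ ‖U_ℓ‖₂ ‖Xβ‖₁`
(`dot_le_of_orthonormal`). The two hypotheses on the data yield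
`‖Xβ‖₁ ≤ (1 + 2μ₁) ‖X'β‖₁ ≤ 3μ₁ (1 + μ₁) ‖(X'β)⁺‖₁ ≤ 6μ₁² ‖(X'β)⁺‖₁`, and
`‖(X'β)⁺‖₁ ≤ f₁(Xβ)` because `g_c(z) ≥ max z 0` (`max_le_gfun`).
-/

open Finset Matrix

lemma max_le_gfun {c : ℝ} (hc : 0 ≤ c ∧ c < 1 / 2) (z : ℝ) : max z 0 ≤ gfun c z := by
  unfold gfun
  have h1 : Real.log (1 - c) ≤ 0 := Real.log_nonpos (by linarith) (by linarith)
  have h2 : 0 ≤ Real.log (1 + Real.exp z) :=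
    Real.log_nonneg (by linarith [Real.exp_pos z])
  have h3 : z ≤ Real.log (1 + Real.exp z) := by
    rw [Real.le_log_iff_exp_le (by linarith [Real.exp_pos z])]
    linarith
  exact max_le (by linarith) (by linarith)

lemma gfun_le_two_mul {c z : ℝ} (hc : 0 ≤ c ∧ c < 1 / 2)
    (hz : Real.log (1 + Real.sqrt 3) ≤ z) : gfun c z ≤ 2 * z := by
  unfold gfun
  have hs : 0 ≤ Real.sqrt 3 := Real.sqrt_nonneg 3
  have hs2 : Real.sqrt 3 ^ 2 = 3 := Real.sq_sqrt (by norm_num)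
  have he : 1 + Real.sqrt 3 ≤ Real.exp z := (Real.log_le_iff_le_exp (by linarith)).1 hz
  rw [← Real.log_div (by linarith [Real.exp_pos z]) (by linarith [hc.2]),
    Real.log_le_iff_le_exp (div_pos (by linarith [Real.exp_pos z]) (by linarith [hc.2])),
    div_le_iff₀ (by linarith [hc.2])]
  have h2 : Real.exp (2 * z) = Real.exp z ^ 2 := by rw [sq, ← Real.exp_add, two_mul]
  -- `1 + √3` is the larger root of `y² - 2y - 2`.
  have h3 : 2 + 2 * Real.exp z ≤ Real.exp z ^ 2 := by nlinarith
  rw [h2]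
  nlinarith [hc.2, sq_nonneg (Real.exp z)]

/-- If `U` has orthonormal columns, each entry of `U v` is at most the norm of the corresponding
row of `U` times `‖U v‖₁`. -/
lemma dot_le_of_orthonormal {ι : Type} [Fintype ι] (U : ι → Fin 2 → ℝ)
    (hU : ∀ k l : Fin 2, ∑ i, U i k * U i l = if k = l then (1 : ℝ) else 0)
    (v : Fin 2 → ℝ) (j : ι) :
    U j ⬝ᵥ v ≤ Real.sqrt (∑ k, (U j k) ^ 2) * ∑ i, |U i ⬝ᵥ v| := by
  have hnorm : ∑ k, v k ^ 2 = ∑ i, |U i ⬝ᵥ v| ^ 2 := by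
    have h00 := hU 0 0
    have h01 := hU 0 1
    have h11 := hU 1 1
    simp only [Fin.isValue, if_true, zero_ne_one, if_false] at h00 h01 h11
    have hexp : ∀ i, |U i ⬝ᵥ v| ^ 2 = v 0 ^ 2 * (U i 0 * U i 0) +
        2 * v 0 * v 1 * (U i 0 * U i 1) + v 1 ^ 2 * (U i 1 * U i 1) := by
      intro i
      rw [sq_abs]
      simp only [dotProduct, Fin.sum_univ_two]
      ring
    simp only [hexp, Finset.sum_add_distrib, ← Finset.mul_sum, h00, h01, h11, Fin.sum_univ_two]
    ring
  have hle : Real.sqrt (∑ k, v k ^ 2) ≤ ∑ i, |U i ⬝ᵥ v| := by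
    rw [hnorm]
    exact Real.sqrt_le_iff.2 ⟨Finset.sum_nonneg fun i _ => abs_nonneg _,
      Finset.sum_sq_le_sq_sum_of_nonneg fun i _ => abs_nonneg _⟩
  exact (Real.sum_mul_le_sqrt_mul_sqrt _ _ _).trans
    (mul_le_mul_of_nonneg_left hle (Real.sqrt_nonneg _))

/-- Complexity applied to `-η` bounds the whole ℓ₁ norm by its positive part. -/
lemma Mu1Complex.sum_abs_le {ι : Type} [Fintype ι] {d : ℕ} {x : ι → Fin d → ℝ} {μ : ℝ}
    (h : Mu1Complex x μ) (η : Fin d → ℝ) :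
    ∑ i, |x i ⬝ᵥ η| ≤ (1 + μ) * ∑ i, max (x i ⬝ᵥ η) 0 := by
  have hη := h (-η)
  simp only [dotProduct_neg, abs_neg, Finset.sum_filter] at hη
  have e1 : ∀ i, (if 0 ≤ -(x i ⬝ᵥ η) then -(x i ⬝ᵥ η) else 0) =
      |x i ⬝ᵥ η| - max (x i ⬝ᵥ η) 0 := by
    intro i
    split_ifs with hi
    · rw [abs_of_nonpos (by linarith), max_eq_right (by linarith), sub_zero]
    · rw [abs_of_nonneg (by linarith), max_eq_left (by linarith), sub_self]
  have e2 : ∀ i, (if -(x i ⬝ᵥ η) < 0 then |x i ⬝ᵥ η| else 0) = max (x i ⬝ᵥ η) 0 := by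
    intro i
    split_ifs with hi
    · rw [abs_of_nonneg (by linarith), max_eq_left (by linarith)]
    · rw [max_eq_right (by linarith)]
  simp only [e1, e2, Finset.sum_sub_distrib] at hη
  linarith


/-- Sensitivity bound for the shifted logistic summands at indices with large
positive margin: if `x'_ℓ·β ≥ ln(1+√3)`, then
`g_{c_ℓ}(x'_ℓ·β) ≤ 12 μ₁² ‖U_ℓ‖₂ · f₁(Xβ)`, where `U` is an orthonormal-column
factor of the vertical concatenation `X` of `X'` and `X''`. -/
theorem stmt11 {m' m'' : ℕ} (μ1 : ℝ) (hμ : 1 ≤ μ1)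
    (X' : Fin m' → Fin 2 → ℝ) (X'' : Fin m'' → Fin 2 → ℝ)
    (hX' : Mu1Complex X' μ1)
    (hX'' : ∀ η : Fin 2 → ℝ, ∑ i, |X'' i ⬝ᵥ η| ≤ 2 * μ1 * ∑ i, |X' i ⬝ᵥ η|)
    (U : Fin m' ⊕ Fin m'' → Fin 2 → ℝ)
    (hU : ∀ k l : Fin 2, ∑ i, U i k * U i l = if k = l then (1 : ℝ) else 0)
    (R : Matrix (Fin 2) (Fin 2) ℝ)
    (hXUR : ∀ i k, Sum.elim X' X'' i k = ∑ l, U i l * R l k)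
    (c : Fin m' → ℝ) (hc : ∀ i, 0 ≤ c i ∧ c i < 1 / 2)
    (ℓ : Fin m') (β : Fin 2 → ℝ)
    (hβ : Real.log (1 + Real.sqrt 3) ≤ X' ℓ ⬝ᵥ β) :
    gfun (c ℓ) (X' ℓ ⬝ᵥ β) ≤
      12 * μ1 ^ 2 * Real.sqrt (∑ k, (U (Sum.inl ℓ) k) ^ 2) *
        ∑ i, gfun (c i) (X' i ⬝ᵥ β) := by
  have hdot : ∀ i, U i ⬝ᵥ (R *ᵥ β) = Sum.elim X' X'' i ⬝ᵥ β := by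
    intro i
    simp only [dotProduct, mulVec, Fin.sum_univ_two, hXUR]
    ring
  have hz := dot_le_of_orthonormal U hU (R *ᵥ β) (Sum.inl ℓ)
  simp only [hdot, Fintype.sum_sum_type, Sum.elim_inl, Sum.elim_inr] at hz
  have hg := gfun_le_two_mul (hc ℓ) hβ
  have hS := hX'.sum_abs_le β
  have hS'' := hX'' β
  have hP0 : 0 ≤ ∑ i, max (X' i ⬝ᵥ β) 0 := Finset.sum_nonneg fun i _ => le_max_right _ _
  have hPF : ∑ i, max (X' i ⬝ᵥ β) 0 ≤ ∑ i, gfun (c i) (X' i ⬝ᵥ β) :=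
    Finset.sum_le_sum fun i _ => max_le_gfun (hc i) _
  have hs := Real.sqrt_nonneg (∑ k, (U (Sum.inl ℓ) k) ^ 2)
  set s := Real.sqrt (∑ k, (U (Sum.inl ℓ) k) ^ 2)
  set P := ∑ i, max (X' i ⬝ᵥ β) 0
  set F := ∑ i, gfun (c i) (X' i ⬝ᵥ β)
  set S := ∑ i, |X' i ⬝ᵥ β|
  have hbound : S + ∑ i, |X'' i ⬝ᵥ β| ≤ 6 * μ1 ^ 2 * F := calc
    S + ∑ i, |X'' i ⬝ᵥ β| ≤ (1 + 2 * μ1) * S := by linarith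
    _ ≤ (1 + 2 * μ1) * ((1 + μ1) * P) := mul_le_mul_of_nonneg_left hS (by linarith)
    _ = ((1 + 2 * μ1) * (1 + μ1)) * P := by ring
    _ ≤ (6 * μ1 ^ 2) * P := mul_le_mul_of_nonneg_right (by nlinarith) hP0
    _ ≤ 6 * μ1 ^ 2 * F := mul_le_mul_of_nonneg_left hPF (by positivity)
  calc gfun (c ℓ) (X' ℓ ⬝ᵥ β) ≤ 2 * (X' ℓ ⬝ᵥ β) := hg
    _ ≤ 2 * (s * (S + ∑ i, |X'' i ⬝ᵥ β|)) := by linarith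
    _ ≤ 2 * (s * (6 * μ1 ^ 2 * F)) := by gcongr
    _ = 12 * μ1 ^ 2 * s * F := by ring
end

section
/- Let μ₁ ≥ 1, let X' ∈ ℝ^{m'×2} with m' ≥ 1 and rows x'_1,…,x'_{m'} be μ₁-complex in the ℓ₁ sense, and let c_1,…,c_{m'} ∈ [0,1/2). Define f₁(X'β) = ∑_{i=1}^{m'} g_{c_i}(x'_i·β). If ℓ ∈ [m'] and β ∈ ℝ² satisfy x'_ℓ·β ≤ 1.005, then g_{c_ℓ}(x'_ℓ·β) ≤ (40 + (5/2)·μ₁)·(1/m')·f₁(X'β). -/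
/-!
Write `s(z) = log (1 + exp z)`, `K = 40 + (5/2) μ₁` and `α = 2.1 / K`. The summand at `ℓ` is at most
`s(1.005) + log 2 ≤ 2.1`, so it suffices that the average of the values `g_{c_i}(z_i) ≥ s(z_i)`,
`z_i = x'_i·β`, is at least `α`. This follows from the pointwise bound (`softplus_lower`)
`s(z) ≥ α + (z⁺ - z⁻ / μ₁) / 2`, summed over all rows: complexity applied to `-β` says
`∑ z_i⁻ ≤ μ₁ ∑ z_i⁺`, so the correction terms have nonnegative sum. The pointwise bound only uses
`α ≤ 1/20` and `α ≤ 1/μ₁`.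
-/

open Finset Matrix

/-- Stated after multiplication by `2 * μ`, with `max z 0` and `max (-z) 0` as the positive and
negative parts of `z`. -/
lemma softplus_lower {μ α : ℝ} (hμ : 1 ≤ μ) (h1 : α ≤ 1 / 20) (h2 : μ * α ≤ 1) (z : ℝ) :
    2 * μ * α + (μ * max z 0 - max (-z) 0) ≤ 2 * μ * Real.log (1 + Real.exp z) := by
  have hz := Real.exp_pos z
  have hμ0 : 0 < μ := by linarith
  rcases le_or_gt 0 z with h | h
  · -- `s(z)` dominates both `log 2` and `z`, hence their mean.
    rw [max_eq_left h, max_eq_right (by linarith)]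
    have ha : z ≤ Real.log (1 + Real.exp z) := by
      rw [Real.le_log_iff_exp_le (by linarith)]; linarith
    have hb : Real.log 2 ≤ Real.log (1 + Real.exp z) :=
      Real.log_le_log (by norm_num) (by linarith [Real.one_le_exp h])
    have := Real.log_two_gt_d9
    have hk : 2 * α + z ≤ 2 * Real.log (1 + Real.exp z) := by linarith
    nlinarith [mul_le_mul_of_nonneg_left hk hμ0.le]
  · rw [max_eq_right h.le, max_eq_left (by linarith)]
    have hs : 0 ≤ Real.log (1 + Real.exp z) := Real.log_nonneg (by linarith)
    rcases le_or_gt z (-2) with h' | h'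
    · nlinarith [mul_nonneg hμ0.le hs]
    · -- Here `exp z ≥ exp (-2) ≥ 1 / 8`, and `log (1 + t) ≥ 1 - 1 / (1 + t)`.
      have he : (1 : ℝ) / 8 ≤ Real.exp z := by
        have e1 : Real.exp (-1) * Real.exp (-1) ≤ Real.exp z := by
          rw [← Real.exp_add]; exact Real.exp_le_exp.mpr (by linarith)
        have := Real.exp_neg_one_gt_d9
        nlinarith
      have hl := Real.one_sub_inv_le_log_of_pos (show (0 : ℝ) < 1 + Real.exp z by linarith)
      have hi : (1 + Real.exp z)⁻¹ ≤ 8 / 9 := by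
        rw [inv_le_comm₀ (by linarith) (by norm_num)]; linarith
      have hk : α ≤ Real.log (1 + Real.exp z) := by linarith
      nlinarith [mul_le_mul_of_nonneg_left hk hμ0.le]

lemma gfun_upper {c z : ℝ} (hc : c < 1 / 2) (hz : z ≤ 1.005) : gfun c z ≤ 2.1 := by
  have h0 := Real.exp_pos z
  have hc' : Real.log (1 / 2) ≤ Real.log (1 - c) := Real.log_le_log (by norm_num) (by linarith)
  have hh : Real.log (1 / 2) = -Real.log 2 := by rw [one_div, Real.log_inv]
  have hlog : Real.log (2 * (1 + Real.exp z)) ≤ 2.1 := by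
    rw [Real.log_le_iff_le_exp (by linarith)]
    have h1 := Real.exp_one_gt_d9
    have h2 := Real.exp_one_lt_d9
    -- `exp (1 / 200) ≤ 1 / (1 - 1 / 200)`, from `1 - t ≤ exp (-t)`.
    have hsmall : Real.exp (1 / 200) ≤ 200 / 199 := by
      have := Real.add_one_le_exp (-(1 / 200) : ℝ)
      rw [Real.exp_neg] at this
      have hp := Real.exp_pos (1 / 200 : ℝ)
      rw [le_inv_comm₀ (by norm_num) hp] at this
      norm_num at this ⊢
      linarith
    have hez : Real.exp z ≤ Real.exp 1 * Real.exp (1 / 200) := by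
      rw [← Real.exp_add]; exact Real.exp_le_exp.mpr (by norm_num at hz ⊢; linarith)
    have hez' : Real.exp z ≤ 2.74 := by nlinarith
    have he : Real.exp 2.1 = Real.exp 1 * Real.exp 1 * Real.exp 0.1 := by
      rw [← Real.exp_add, ← Real.exp_add]; norm_num
    have h3 := Real.add_one_le_exp (0.1 : ℝ)
    have h4 : (7.38 : ℝ) ≤ Real.exp 1 * Real.exp 1 := by nlinarith
    rw [he]
    nlinarith
  rw [Real.log_mul (by norm_num) (by linarith)] at hlog
  unfold gfun
  linarith

/-- Sensitivity bound for the shifted logistic summands at indices with small margin: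
if `x'_ℓ·β ≤ 1.005`, then `g_{c_ℓ}(x'_ℓ·β) ≤ (40 + (5/2)μ₁)·(1/m')·f₁(X'β)`. -/
theorem stmt12 {m' : ℕ} (hm : 1 ≤ m') (μ1 : ℝ) (hμ : 1 ≤ μ1)
    (X' : Fin m' → Fin 2 → ℝ) (hX' : Mu1Complex X' μ1)
    (c : Fin m' → ℝ) (hc : ∀ i, 0 ≤ c i ∧ c i < 1 / 2)
    (ℓ : Fin m') (β : Fin 2 → ℝ) (hβ : X' ℓ ⬝ᵥ β ≤ 1.005) :
    gfun (c ℓ) (X' ℓ ⬝ᵥ β) ≤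
      (40 + 5 / 2 * μ1) * (1 / (m' : ℝ)) * ∑ i, gfun (c i) (X' i ⬝ᵥ β) := by
  have hμ0 : 0 < μ1 := by linarith
  have hm0 : (0 : ℝ) < m' := by exact_mod_cast hm
  set K : ℝ := 40 + 5 / 2 * μ1 with hK
  have hK0 : 0 < K := by positivity
  set α : ℝ := 2.1 / K with hα
  have hαK : K * α = 2.1 := by rw [hα]; field_simp
  have h1 : α ≤ 1 / 20 := by
    rw [hα, div_le_iff₀ hK0]; norm_num; linarith
  have h2 : μ1 * α ≤ 1 := by
    rw [hα, ← mul_div_assoc, div_le_iff₀ hK0]; norm_num; linarith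
  have hbal : 0 ≤ ∑ i, (μ1 * max (X' i ⬝ᵥ β) 0 - max (-(X' i ⬝ᵥ β)) 0) := by
    have h := hX' (-β)
    simp only [dotProduct_neg, abs_neg] at h
    rw [Finset.sum_filter, Finset.sum_filter] at h
    rw [Finset.sum_sub_distrib, ← Finset.mul_sum, sub_nonneg]
    convert h using 3 with i _ i _
    · split_ifs with hi
      · exact max_eq_left hi
      · exact max_eq_right (by linarith)
    · split_ifs with hi
      · rw [abs_of_pos (by linarith), max_eq_left (by linarith)]
      · exact max_eq_right (by linarith)
  have hg : ∀ i, Real.log (1 + Real.exp (X' i ⬝ᵥ β)) ≤ gfun (c i) (X' i ⬝ᵥ β) := fun i => by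
    have := Real.log_nonpos (x := 1 - c i) (by linarith [(hc i).2]) (by linarith [(hc i).1])
    unfold gfun
    linarith
  have hsum : ∑ i : Fin m', (2 * μ1 * α + (μ1 * max (X' i ⬝ᵥ β) 0 - max (-(X' i ⬝ᵥ β)) 0)) ≤
      ∑ i, 2 * μ1 * gfun (c i) (X' i ⬝ᵥ β) :=
    Finset.sum_le_sum fun i _ => (softplus_lower hμ h1 h2 _).trans
      (mul_le_mul_of_nonneg_left (hg i) (by positivity))
  rw [Finset.sum_add_distrib, Finset.sum_const, Finset.card_univ, Fintype.card_fin, nsmul_eq_mul,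
    ← Finset.mul_sum] at hsum
  set S := ∑ i, gfun (c i) (X' i ⬝ᵥ β)
  have havg : m' * α ≤ S := by
    have : 2 * μ1 * (m' * α) ≤ 2 * μ1 * S := by linarith
    exact le_of_mul_le_mul_left this (by positivity)
  calc gfun (c ℓ) (X' ℓ ⬝ᵥ β) ≤ 2.1 := gfun_upper (hc ℓ).2 hβ
    _ = K * (1 / m') * (m' * α) := by rw [← hαK]; field_simp
    _ ≤ K * (1 / m') * S := mul_le_mul_of_nonneg_left havg (by positivity)
end
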